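/- arXiv:1005.4277 — 2 statements merged into one kernel-verified Lean document; each statement's English description precedes it below -/
import Mathlib

section
/- For all a, b, c ∈ ℂ \ (1/2)ℤ, the R-matrix maps satisfy the Yang–Baxter (braid) relation as linear maps V^a ⊗ V^b ⊗ V^c → V^c ⊗ V^b ⊗ V^a: (R_{b,c} ⊗ id_{V^a}) ∘ (id_{V^b} ⊗ R_{a,c}) ∘ (R_{a,b} ⊗ id_{V^c}) = (id_{V^c} ⊗ R_{a,b}) ∘ (R_{a,c} ⊗ id_{V^b}) ∘ (id_{V^a} ⊗ R_{b,c}). -/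
open Complex Finset Filter
open scoped Matrix Kronecker Real

noncomputable section

/-- `ξ^a = exp(π √-1 a / n)` for the `2n`-th root of unity `ξ = exp(π √-1/n)`. -/
def xic (n : ℕ) (a : ℂ) : ℂ := Complex.exp (Real.pi * Complex.I * a / n)

/-- `{a} = ξ^a - ξ^{-a}`. -/
def qn (n : ℕ) (a : ℂ) : ℂ := xic n a - xic n (-a)

/-- `{k}! = {1}{2}⋯{k}`. -/
def qfac (n : ℕ) (k : ℕ) : ℂ := ∏ j ∈ Finset.range k, qn n ((j : ℂ) + 1)

-- The quantum binomial `[a¦b]`, defined (and nonzero) only when `a - b ∈ {0,1,…,n-1}`.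
open Classical in
def qbin (n : ℕ) (a b : ℂ) : ℂ :=
  if h : ∃ k : ℕ, k < n ∧ a - b = (k : ℂ) then
    ∏ j ∈ Finset.range h.choose, qn n (a - (j : ℂ)) / qn n (a - b - (j : ℂ))
  else 0

/-- `[a] = {a}/{1}`. -/
def qint (n : ℕ) (a : ℂ) : ℂ := qn n a / qn n 1

/-- `a` is not a half-integer. -/
def NotHalfInt (a : ℂ) : Prop := ∀ m : ℤ, a ≠ (m : ℂ) / 2

/-- `x ∈ {0, 1, …, n-1}` (as a complex number). -/
def InZn (n : ℕ) (x : ℂ) : Prop := ∃ k : ℕ, k < n ∧ x = (k : ℂ)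

/-- The matrix of `E` on `V^a = ℂ^n`: `E e_j = [j] e_{j-1}` (independent of `a`). -/
def Emat (n : ℕ) : Matrix (Fin n) (Fin n) ℂ :=
  Matrix.of fun i j => if (j : ℕ) = (i : ℕ) + 1 then qint n ((j : ℕ) : ℂ) else 0

/-- The matrix of `F` on `V^a`: `F e_j = [2a-j] e_{j+1}` (with `e_n = 0`). -/
def Fmat (n : ℕ) (a : ℂ) : Matrix (Fin n) (Fin n) ℂ :=
  Matrix.of fun i j => if (i : ℕ) = (j : ℕ) + 1 then qint n (2 * a - ((j : ℕ) : ℂ)) else 0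

/-- The matrix of `K` on `V^a`: `K e_j = ξ^{a-j} e_j`. -/
def Kmat (n : ℕ) (a : ℂ) : Matrix (Fin n) (Fin n) ℂ :=
  Matrix.of fun i j => if i = j then xic n (a - ((i : ℕ) : ℂ)) else 0

/-- The matrix of `K⁻¹` on `V^a`. -/
def Kinvmat (n : ℕ) (a : ℂ) : Matrix (Fin n) (Fin n) ℂ :=
  Matrix.of fun i j => if i = j then xic n (-(a - ((i : ℕ) : ℂ))) else 0

/-- The `R`-matrix `R_{a,b} : V^a ⊗ V^b → V^b ⊗ V^a`:
`R(e_u ⊗ e_v) = Σ_m {m}! ξ^{2(a-u)(b-v) - m(a-b-u+v) - m(m+1)/2} [u¦u-m] [2b-v¦2b-v-m]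
e_{v+m} ⊗ e_{u-m}`; the entry at row `(h,k)`, column `(u,v)` is the coefficient of
`e_h ⊗ e_k`, nonzero only when `h + k = u + v` and `h ≥ v` (with `m = h - v`). -/
def Rmat (n : ℕ) (a b : ℂ) : Matrix (Fin n × Fin n) (Fin n × Fin n) ℂ :=
  Matrix.of fun p q =>
    if ((p.1 : ℕ) + (p.2 : ℕ) = (q.1 : ℕ) + (q.2 : ℕ)) ∧ ((q.2 : ℕ) ≤ (p.1 : ℕ)) then
      (fun m : ℕ =>
        qfac n m *
        xic n (2 * (a - ((q.1 : ℕ) : ℂ)) * (b - ((q.2 : ℕ) : ℂ))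
            - (m : ℂ) * (a - b - ((q.1 : ℕ) : ℂ) + ((q.2 : ℕ) : ℂ))
            - (m : ℂ) * ((m : ℂ) + 1) / 2) *
        qbin n ((q.1 : ℕ) : ℂ) (((q.1 : ℕ) : ℂ) - (m : ℂ)) *
        qbin n (2 * b - ((q.2 : ℕ) : ℂ)) (2 * b - ((q.2 : ℕ) : ℂ) - (m : ℂ)))
      ((p.1 : ℕ) - (q.2 : ℕ))
    else 0

/-- The Clebsch-Gordan quantum coefficient `C^{a,b,c}_{u,v,t}`. -/
def CG (n : ℕ) (a b c : ℂ) (u v t : ℕ) : ℂ :=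
  Complex.exp (Real.pi * Complex.I * (c - a - b) / 2) *
  (-1 : ℂ) ^ ((v : ℤ) - (t : ℤ)) *
  xic n (((v : ℂ) * (2 * b - (v : ℂ) + 1) - (u : ℂ) * (2 * a - (u : ℂ) + 1)) / 2) *
  (qbin n (2 * c) (2 * c - (t : ℂ)))⁻¹ *
  qbin n (2 * c) (a + b + c - ((n : ℂ) - 1)) *
  ∑ z ∈ Finset.range (t + 1),
    (-1 : ℂ) ^ z * xic n ((2 * (z : ℂ) - (t : ℂ)) * (2 * c - (t : ℂ) + 1) / 2) *
    qbin n (a + b - c) ((u : ℂ) - (z : ℂ)) *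
    qbin n (2 * a - (u : ℂ) + (z : ℂ)) (2 * a - (u : ℂ)) *
    qbin n (2 * b - (v : ℂ) + ((t : ℂ) - (z : ℂ))) (2 * b - (v : ℂ))

-- The inclusion `Y_c^{a,b} : V^c → V^a ⊗ V^b`.
open Classical in
def Yinc (n : ℕ) (a b c : ℂ) : Matrix (Fin n × Fin n) (Fin n) ℂ :=
  Matrix.of fun p t =>
    if ((p.1 : ℕ) : ℂ) + ((p.2 : ℕ) : ℂ) - ((t : ℕ) : ℂ) = a + b - c then
      CG n a b c (p.1 : ℕ) (p.2 : ℕ) (t : ℕ)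
    else 0

-- The projection `Y_{a,b}^c : V^a ⊗ V^b → V^c`.
open Classical in
def Yproj (n : ℕ) (a b c : ℂ) : Matrix (Fin n) (Fin n × Fin n) ℂ :=
  Matrix.of fun t p =>
    if ((p.1 : ℕ) : ℂ) + ((p.2 : ℕ) : ℂ) - ((t : ℕ) : ℂ) = a + b - c then
      CG n ((n : ℂ) - 1 - b) ((n : ℂ) - 1 - a) ((n : ℂ) - 1 - c)
        (n - 1 - (p.2 : ℕ)) (n - 1 - (p.1 : ℕ)) (n - 1 - (t : ℕ))
    else 0

-- Extracts the natural number `k` with `x = k` (0 if there is none).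
open Classical in
def natIdx (x : ℂ) : ℕ := if h : ∃ k : ℕ, x = (k : ℂ) then h.choose else 0

/-- The `SL(2,ℂ)` quantum 6j-symbol `{a b e; d c f}_ξ`. -/
def sixj (n : ℕ) (a b e d c f : ℂ) : ℂ :=
  (-1 : ℂ) ^ (n - 1 + natIdx (a + f - c)) *
  (qbin n (2 * f + (n : ℂ)) (2 * f + 1))⁻¹ *
  (qfac n (natIdx (d + e - c)) * qfac n (natIdx (a + b - e)) /
    (qfac n (natIdx (b + d - f)) * qfac n (natIdx (a + f - c)))) *
  qbin n (2 * e) (a + b + e + 1 - (n : ℂ)) *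
  (qbin n (2 * e) (e + c - d))⁻¹ *
  ∑ z ∈ Finset.Icc (natIdx (d + e - c) - natIdx (b + d - f))
      (min (natIdx (d + e - c)) (natIdx (a + f - c))),
    (-1 : ℂ) ^ z * qbin n (a + f + c + 1) (2 * c + (z : ℂ) + 1) *
    qbin n ((a + c - f) + (z : ℂ)) (a + c - f) *
    qbin n ((b + f - d) + (d + e - c) - (z : ℂ)) (b + f - d) *
    qbin n ((d + c - e) + (z : ℂ)) (d + f - b)

/-- The tetrahedral symbol `{a b e; d c f}_tet = {a b e; d c f}_ξ · [2f+n¦2f+1]`. -/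
def sixjtet (n : ℕ) (a b e d c f : ℂ) : ℂ :=
  sixj n a b e d c f * qbin n (2 * f + (n : ℂ)) (2 * f + 1)

/-- The Lobachevsky function `Λ(x) = -∫_0^x log|2 sin t| dt`. -/
def lob (x : ℝ) : ℝ := -∫ t in (0 : ℝ)..x, Real.log |2 * Real.sin t|

/-- A triple of integers is admissible. -/
def Admissible (n : ℕ) (i j k : ℤ) : Prop :=
  0 < i ∧ 0 < j ∧ 0 < k ∧ i < (n : ℤ) - 1 ∧ j < (n : ℤ) - 1 ∧ k < (n : ℤ) - 1 ∧
  (n : ℤ) - 1 < i + j + k ∧ i + j + k < 2 * ((n : ℤ) - 1) ∧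
  0 < i + j - k ∧ 0 < j + k - i ∧ 0 < k + i - j ∧
  i + j - k < (n : ℤ) - 1 ∧ j + k - i < (n : ℤ) - 1 ∧ k + i - j < (n : ℤ) - 1


/-- `R ⊗ id` acting on the first two factors of `V ⊗ V ⊗ V`. -/
def R12 (n : ℕ) (a b : ℂ) :
    Matrix (Fin n × Fin n × Fin n) (Fin n × Fin n × Fin n) ℂ :=
  Matrix.of fun p q =>
    Rmat n a b (p.1, p.2.1) (q.1, q.2.1) * (if p.2.2 = q.2.2 then 1 else 0)

/-- `id ⊗ R` acting on the last two factors of `V ⊗ V ⊗ V`. -/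
def R23 (n : ℕ) (a b : ℂ) :
    Matrix (Fin n × Fin n × Fin n) (Fin n × Fin n × Fin n) ℂ :=
  Matrix.of fun p q =>
    (if p.1 = q.1 then 1 else 0) * Rmat n a b (p.2.1, p.2.2) (q.2.1, q.2.2)


def qG (n : ℕ) : ℕ → ℤ → ℂ
  | 0, s => if s = 0 then 1 else 0
  | v + 1, s => xic n (s : ℂ) * qG n v s + xic n ((s : ℂ) - v - 1) * qG n v (s - 1)

def qP (n : ℕ) (x : ℂ) (m : ℕ) : ℂ := ∏ j ∈ Finset.range m, qn n (x - (j : ℂ))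

lemma xm (n : ℕ) (a b c : ℂ) (h : a + b = c) : xic n a * xic n b = xic n c := by
  subst h
  unfold xic
  rw [← Complex.exp_add]
  congr 1
  ring

lemma xic_zero (n : ℕ) : xic n 0 = 1 := by simp [xic]

lemma x1 (n : ℕ) (a b : ℂ) (h : a + b = 0) : xic n a * xic n b = 1 := by
  rw [xm n a b 0 h, xic_zero]

lemma qG_succ (n v : ℕ) (s : ℤ) : qG n (v + 1) s =
    xic n (s : ℂ) * qG n v s + xic n ((s : ℂ) - v - 1) * qG n v (s - 1) := by rw [qG]

lemma qG_neg (n v : ℕ) (s : ℤ) (h : s < 0) : qG n v s = 0 := by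
  induction v generalizing s with
  | zero => simp [qG]; omega
  | succ v ih => rw [qG, ih s h, ih (s - 1) (by omega)]; simp

lemma qG_gt (n v : ℕ) (s : ℤ) (h : (v : ℤ) < s) : qG n v s = 0 := by
  induction v generalizing s with
  | zero => simp [qG]; push_cast at h; omega
  | succ v ih =>
    push_cast at h
    rw [qG, ih s (by omega), ih (s - 1) (by omega)]; simp

lemma qG_pascal (n v : ℕ) (s : ℤ) : qG n (v + 1) s =
    xic n (-(s : ℂ)) * qG n v s + xic n ((v : ℂ) + 1 - s) * qG n v (s - 1) := by
  induction v generalizing s with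
  | zero =>
    simp only [qG]
    by_cases h0 : s = 0
    · subst h0; simp
    · by_cases h1 : s = 1
      · subst h1; simp
      · simp [h0, show s - 1 ≠ 0 by omega]
  | succ v ih =>
    conv_lhs => rw [qG_succ n (v + 1) s, ih s, ih (s - 1)]
    conv_rhs => rw [qG_succ n v s, qG_succ n v (s - 1)]
    have e2 := xm n (s : ℂ) ((v : ℂ) + 1 - s) (v + 1) (by ring)
    have e3 := xm n ((s : ℂ) - (v + 1) - 1) (-((s : ℂ) - 1)) (-(v + 1)) (by ring)
    have e4 := x1 n ((s : ℂ) - (v + 1) - 1) ((v : ℂ) + 1 - (s - 1)) (by ring)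
    have e5 := xm n (-(s : ℂ)) ((s : ℂ) - v - 1) (-(v + 1)) (by ring)
    have e6 := xm n ((v : ℂ) + 1 + 1 - s) ((s : ℂ) - 1) (v + 1) (by ring)
    have e7 := x1 n ((v : ℂ) + 1 + 1 - s) ((s : ℂ) - 1 - v - 1) (by ring)
    push_cast
    linear_combination qG n v (s - 1) * (e2 + e3 - e5 - e6) + qG n v (s - 1 - 1) * (e4 - e7)

lemma qP_zero (n : ℕ) (x : ℂ) : qP n x 0 = 1 := by simp [qP]

lemma qP_succ (n : ℕ) (x : ℂ) (m : ℕ) : qP n x (m + 1) = qP n x m * qn n (x - m) := by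
  simp [qP, Finset.prod_range_succ]

lemma qP_succ' (n : ℕ) (x : ℂ) (m : ℕ) : qP n x (m + 1) = qn n x * qP n (x - 1) m := by
  simp only [qP, Finset.prod_range_succ']
  rw [mul_comm]
  congr 1
  · simp
  · refine Finset.prod_congr rfl fun j _ => ?_
    congr 1; push_cast; ring

lemma qP_add (n : ℕ) (x : ℂ) (l m : ℕ) : qP n x (l + m) = qP n x l * qP n (x - l) m := by
  simp only [qP, Finset.prod_range_add]
  congr 1
  refine Finset.prod_congr rfl fun j _ => ?_
  congr 1; push_cast; ring

lemma qfac_succ (n m : ℕ) : qfac n (m + 1) = qfac n m * qn n ((m : ℂ) + 1) := by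
  simp [qfac, Finset.prod_range_succ]

lemma qfac_eq (n m : ℕ) : qfac n m = qP n m m := by
  induction m with
  | zero => simp [qfac, qP]
  | succ m ih =>
    rw [qfac_succ, ih, qP_succ', mul_comm]
    push_cast
    simp

lemma qG_fac (n u m : ℕ) : qG n u m * qfac n m = qP n u m := by
  induction u generalizing m with
  | zero =>
    cases m with
    | zero => simp [qG, qfac, qP]
    | succ m => rw [qP_succ']; simp [qG, qn]; intro; omega
  | succ u ih =>
    cases m with
    | zero =>
      have h := ih 0
      rw [qG_succ, qG_neg n u (((0 : ℕ) : ℤ) - 1) (by norm_num)]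
      simp [qP_zero, xic_zero] at h ⊢
      exact h
    | succ m =>
      rw [qG]
      have h1 := ih (m + 1)
      have h2 := ih m
      rw [show (((m + 1 : ℕ) : ℤ) - 1) = (m : ℤ) by push_cast; ring]
      rw [qP_succ] at h1
      rw [qP_succ']
      rw [qfac_succ] at h1 ⊢
      push_cast at h1 ⊢
      have e : qn n ((u : ℂ) + 1) = xic n ((m : ℂ) + 1) * qn n ((u : ℂ) - m)
          + xic n ((m : ℂ) + 1 - u - 1) * qn n ((m : ℂ) + 1) := by
        unfold qn
        have e1 := xm n ((m : ℂ) + 1) ((u : ℂ) - m) (u + 1) (by ring)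
        have e2 := xm n ((m : ℂ) + 1) (-((u : ℂ) - m)) (2 * m + 1 - u) (by ring)
        have e3 := xm n ((m : ℂ) + 1 - u - 1) ((m : ℂ) + 1) (2 * m + 1 - u) (by ring)
        have e4 := xm n ((m : ℂ) + 1 - u - 1) (-((m : ℂ) + 1)) (-(u + 1)) (by ring)
        linear_combination -e1 + e2 - e3 + e4
      rw [e, show ((u : ℂ) + 1 - 1) = u by ring]
      linear_combination xic n ((m : ℂ) + 1) * h1
        + xic n ((m : ℂ) + 1 - u - 1) * qn n ((m : ℂ) + 1) * h2

lemma qn_ne (n k : ℕ) (h0 : 0 < k) (h : k < n) : qn n k ≠ 0 := by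
  unfold qn xic
  intro hh
  rw [sub_eq_zero, Complex.exp_eq_exp_iff_exists_int] at hh
  obtain ⟨z, hz⟩ := hh
  have hn : (n : ℂ) ≠ 0 := by
    have : n ≠ 0 := by omega
    exact_mod_cast this
  have hpi : (Real.pi : ℂ) * Complex.I ≠ 0 := by
    simp [Real.pi_ne_zero]
  field_simp at hz
  have h2 : (k : ℂ) = n * z := by
    have := mul_left_cancel₀ (show (2 : ℂ) ≠ 0 by norm_num)
      (show (2 : ℂ) * k = 2 * (n * z) by linear_combination hz)
    exact this
  have h3 : (k : ℤ) = n * z := by exact_mod_cast h2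
  have : (n : ℤ) ∣ k := ⟨z, h3⟩
  have := Int.natCast_dvd_natCast.mp this
  have := Nat.le_of_dvd h0 this
  omega

lemma qn_self (n : ℕ) (hn : 2 ≤ n) : qn n n = 0 := by
  unfold qn xic
  have hn : (n : ℂ) ≠ 0 := by
    have : n ≠ 0 := by omega
    exact_mod_cast this
  rw [sub_eq_zero, Complex.exp_eq_exp_iff_exists_int]
  refine ⟨1, ?_⟩
  field_simp
  push_cast
  ring

lemma qfac_ne (n m : ℕ) (h : m < n) : qfac n m ≠ 0 := by
  unfold qfac
  rw [Finset.prod_ne_zero_iff]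
  intro j hj
  have := Finset.mem_range.mp hj
  have := qn_ne n (j + 1) (by omega) (by omega)
  push_cast at this
  exact this

lemma qG_vanish (n N j : ℕ) (hn : 2 ≤ n) (h1 : n ≤ N) (h2 : j < n) (h3 : N < n + j) :
    qG n N j = 0 := by
  have h := qG_fac n N j
  have hp : qP n N j = 0 := by
    unfold qP
    apply Finset.prod_eq_zero (i := N - n) (Finset.mem_range.mpr (by omega))
    rw [Nat.cast_sub h1, show (N : ℂ) - (N - n) = n by ring]
    exact qn_self n hn
  rw [hp] at h
  exact (mul_eq_zero.mp h).resolve_right (qfac_ne n j h2)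

lemma qbin_eq (n : ℕ) (x : ℂ) (m : ℕ) (h : m < n) :
    qbin n x (x - m) * qfac n m = qP n x m := by
  unfold qbin
  have hex : ∃ k : ℕ, k < n ∧ x - (x - (m : ℂ)) = (k : ℂ) := ⟨m, h, by ring⟩
  rw [dif_pos hex]
  have hc : hex.choose = m := by
    have := hex.choose_spec.2
    have h2 : (m : ℂ) = (hex.choose : ℂ) := by rw [← this]; ring
    exact_mod_cast h2.symm
  rw [hc, Finset.prod_div_distrib, show x - (x - (m : ℂ)) = m by ring]
  have := qfac_ne n m h
  rw [qfac_eq] at this ⊢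
  unfold qP at this ⊢
  rw [div_mul_cancel₀ _ this]

lemma qG_mul (n u l m : ℕ) (hu : l + m ≤ u) (h : l + m < n) :
    qG n u l * qG n (u - l) m = qG n u ((l + m : ℕ) : ℤ) * qG n (l + m) m := by
  have a1 := qG_fac n u l
  have a2 := qG_fac n (u - l) m
  have a3 := qG_fac n u (l + m)
  have a4 := qG_fac n (l + m) m
  have a5 := qP_add n u l m
  have a6 := qP_add n ((l + m : ℕ) : ℂ) m l
  rw [Nat.cast_sub (by omega)] at a2
  have a7 := qfac_eq n (l + m)
  rw [show ((l + m : ℕ) : ℂ) - m = l by push_cast; ring, ← qfac_eq, Nat.add_comm m l,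
    ← qfac_eq] at a6
  have h1 := qfac_ne n l (by omega)
  have h2 := qfac_ne n m (by omega)
  apply mul_right_cancel₀ (mul_ne_zero h1 h2)
  rw [a6, ← a4] at a3
  calc _ = (qG n u l * qfac n l) * (qG n (u - l) m * qfac n m) := by ring
    _ = qP n u (l + m) := by rw [a1, a2, a5]
    _ = _ := by rw [← a3]; ring

def qL (n t v : ℕ) (s : ℤ) (x : ℂ) : ℂ := ∑ m ∈ Finset.range (t + 1),
  qG n t m * qG n (v + t - m) (s - m) *
    xic n (-(m * x) + (v + t - s) * m - m * (m - 1) / 2) * qP n x (t - m)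

def qR (n t v : ℕ) (s : ℤ) (x : ℂ) : ℂ := ∑ m ∈ Finset.range (t + 1),
  qG n t m * qG n v (s - m) *
    xic n ((m * x) - (v + t - s) * m - m * (m - 1) / 2) * qP n (x + s - m) (t - m)

lemma sum_pascal (n t : ℕ) (f : ℕ → ℂ) :
    ∑ m ∈ Finset.range (t + 1 + 1), qG n (t + 1) m * f m =
    ∑ m ∈ Finset.range (t + 1), (qG n t m * (xic n m * f m) +
      qG n t m * (xic n ((m : ℂ) - t) * f (m + 1))) := by
  rw [Finset.sum_add_distrib]
  have : ∀ m : ℕ, qG n (t + 1) m * f m = qG n t m * (xic n m * f m) +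
      qG n t ((m : ℤ) - 1) * (xic n ((m : ℂ) - t - 1) * f m) := by
    intro m; rw [qG]; push_cast; ring
  rw [Finset.sum_congr rfl (fun m _ => this m), Finset.sum_add_distrib]
  congr 1
  · rw [Finset.sum_range_succ, qG_gt n t ((t + 1 : ℕ) : ℤ) (by push_cast; omega)]; simp
  · rw [Finset.sum_range_succ', qG_neg n t _ (by simp)]
    rw [zero_mul, add_zero]
    refine Finset.sum_congr rfl fun m _ => ?_
    push_cast
    rw [show (m : ℤ) + 1 - 1 = m by ring, show (m : ℂ) + 1 - t - 1 = m - t by ring]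

lemma sum_pascal' (n t : ℕ) (f : ℕ → ℂ) :
    ∑ m ∈ Finset.range (t + 1 + 1), qG n (t + 1) m * f m =
    ∑ m ∈ Finset.range (t + 1), (qG n t m * (xic n (-(m : ℂ)) * f m) +
      qG n t m * (xic n ((t : ℂ) - m) * f (m + 1))) := by
  rw [Finset.sum_add_distrib]
  have : ∀ m : ℕ, qG n (t + 1) m * f m = qG n t m * (xic n (-(m : ℂ)) * f m) +
      qG n t ((m : ℤ) - 1) * (xic n ((t : ℂ) + 1 - m) * f m) := by
    intro m; rw [qG_pascal]; push_cast; ring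
  rw [Finset.sum_congr rfl (fun m _ => this m), Finset.sum_add_distrib]
  congr 1
  · rw [Finset.sum_range_succ, qG_gt n t ((t + 1 : ℕ) : ℤ) (by push_cast; omega)]; simp
  · rw [Finset.sum_range_succ', qG_neg n t _ (by simp)]
    rw [zero_mul, add_zero]
    refine Finset.sum_congr rfl fun m _ => ?_
    push_cast
    rw [show (m : ℤ) + 1 - 1 = m by ring, show (t : ℂ) + 1 - (m + 1) = t - m by ring]

lemma qL_succ (n t v : ℕ) (s : ℤ) (x : ℂ) : qL n (t + 1) v s x =
    qn n x * qL n t (v + 1) s (x - 1) + xic n (v + 1 - s - x) * qL n t v (s - 1) x := by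
  unfold qL
  simp only [mul_assoc]
  rw [sum_pascal, Finset.mul_sum, Finset.mul_sum, ← Finset.sum_add_distrib]
  refine Finset.sum_congr rfl fun m hm => ?_
  have hm' := Finset.mem_range.mp hm
  rw [show t + 1 - m = (t - m) + 1 by omega, qP_succ', show v + (t + 1) - m = v + 1 + t - m by omega,
    show v + (t + 1) - (m + 1) = v + t - m by omega, show t + 1 - (m + 1) = t - m by omega]
  rw [show s - ((m + 1 : ℕ) : ℤ) = s - 1 - m by push_cast; ring]
  push_cast
  have e1 := xm n m (-(m * x) + (v + (t + 1) - s) * m - m * (m - 1) / 2)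
    (-(m * (x - 1)) + (v + 1 + t - s) * m - m * (m - 1) / 2) (by ring)
  have e2 := xm n (m - t) (-((m + 1) * x) + (v + (t + 1) - s) * (m + 1) - (m + 1) * (m + 1 - 1) / 2)
    ((v + 1 - s - x) + (-(m * x) + (v + t - (s - 1)) * m - m * (m - 1) / 2)) (by ring)
  rw [← xm n _ _ _ rfl] at e2
  linear_combination qG n t m * qG n (v + 1 + t - m) (s - m) * qn n x * qP n (x - 1) (t - m) * e1
    + qG n t m * qG n (v + t - m) (s - 1 - m) * qP n x (t - m) * e2

lemma key1 (n v : ℕ) (s : ℤ) (x : ℂ) :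
    qn n (x + s) * qG n v s + xic n (x - (v + 1 - s)) * qG n v (s - 1) =
    qn n x * qG n (v + 1) s + xic n (v + 1 - s - x) * qG n v (s - 1) := by
  have h1 : qG n (v + 1) s = xic n (s : ℂ) * qG n v s +
    xic n ((s : ℂ) - v - 1) * qG n v (s - 1) := by rw [qG]
  have h2 := qG_pascal n v s
  unfold qn
  have e1 := xm n x s (x + s) (by ring)
  have e2 := xm n x (s - v - 1) (x - (v + 1 - s)) (by ring)
  have e3 := xm n (-x) (-s) (-(x + s)) (by ring)
  have e4 := xm n (-x) (v + 1 - s) (v + 1 - s - x) (by ring)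
  linear_combination -xic n x * h1 + xic n (-x) * h2 - qG n v s * e1 - qG n v (s - 1) * e2
    + qG n v s * e3 + qG n v (s - 1) * e4

lemma qR_succ (n t v : ℕ) (s : ℤ) (x : ℂ) : qR n (t + 1) v s x =
    qn n x * qR n t (v + 1) s (x - 1) + xic n (v + 1 - s - x) * qR n t v (s - 1) x := by
  unfold qR
  simp only [mul_assoc]
  rw [sum_pascal', Finset.mul_sum, Finset.mul_sum, ← Finset.sum_add_distrib]
  refine Finset.sum_congr rfl fun m hm => ?_
  have hm' := Finset.mem_range.mp hm
  rw [show t + 1 - m = (t - m) + 1 by omega, qP_succ',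
    show t + 1 - (m + 1) = t - m by omega]
  rw [show s - ((m + 1 : ℕ) : ℤ) = s - 1 - m by push_cast; ring]
  push_cast
  rw [show x - 1 + s - m = x + s - m - 1 by ring, show x + (s - 1) - m = x + s - m - 1 by ring,
    show x + s - (m + 1) = x + s - m - 1 by ring]
  have k := key1 n v (s - m) x
  rw [show s - m - 1 = s - 1 - m by ring] at k
  push_cast at k
  rw [show x + (s - m) = x + s - m by ring] at k
  have e1 := xm n (-m) (m * x - (v + (t + 1) - s) * m - m * (m - 1) / 2)
    (m * (x - 1) - (v + 1 + t - s) * m - m * (m - 1) / 2) (by ring)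
  have e2 := xm n (t - m) ((m + 1) * x - (v + (t + 1) - s) * (m + 1) - (m + 1) * (m + 1 - 1) / 2)
    ((x - (v + 1 - (s - m))) + (m * (x - 1) - (v + 1 + t - s) * m - m * (m - 1) / 2)) (by ring)
  rw [← xm n _ _ _ rfl] at e2
  have e3 := xm n (v + 1 - s - x) (m * x - (v + t - (s - 1)) * m - m * (m - 1) / 2)
    ((v + 1 - (s - m) - x) + (m * (x - 1) - (v + 1 + t - s) * m - m * (m - 1) / 2)) (by ring)
  rw [← xm n (v + 1 - (s - m) - x) _ _ rfl] at e3
  linear_combination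
    qG n t m * qP n (x + s - m - 1) (t - m) * (qG n v (s - m) * qn n (x + s - m) * e1
     + qG n v (s - 1 - m) * e2 - qG n v (s - 1 - m) * e3
     + xic n (m * (x - 1) - (v + 1 + t - s) * m - m * (m - 1) / 2) * k)

lemma qL_eq_qR (n t v : ℕ) (s : ℤ) (x : ℂ) : qL n t v s x = qR n t v s x := by
  induction t generalizing v s x with
  | zero => simp [qL, qR, qP_zero]
  | succ t ih => rw [qL_succ, qR_succ, ih, ih]


def qRc (n : ℕ) (a b : ℂ) (u v m : ℕ) : ℂ :=
  qG n u m * qP n (2 * b - v) m *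
    xic n (2 * (a - u) * (b - v) - m * (a - b - u + v) - m * (m + 1) / 2)

lemma Rmat_eq (n : ℕ) (a b : ℂ) (p1 p2 u v : Fin n) : Rmat n a b (p1, p2) (u, v) =
    if (p1 : ℕ) + p2 = u + v ∧ (v : ℕ) ≤ p1 then qRc n a b u v (p1 - v) else 0 := by
  unfold Rmat qRc
  simp only [Matrix.of_apply]
  split_ifs with h
  · have hm : (p1 : ℕ) - v < n := by omega
    generalize (p1 : ℕ) - v = m at hm
    have h1 := qbin_eq n ((u : ℕ) : ℂ) m hm
    have h2 := qbin_eq n (2 * b - ((v : ℕ) : ℂ)) m hm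
    have h3 := qG_fac n u m
    have h4 : qbin n ((u : ℕ) : ℂ) (((u : ℕ) : ℂ) - (m : ℂ)) = qG n u m :=
      mul_right_cancel₀ (qfac_ne n m hm) (by rw [h1, h3])
    rw [h4, ← h2]
    ring
  · rfl

lemma lhs_entry (n : ℕ) (a b c : ℂ) (p1 p2 p3 u v w : Fin n) :
    (R12 n b c * R23 n a c * R12 n a b) (p1, p2, p3) (u, v, w) =
    ∑ i : Fin n × Fin n × Fin n, Rmat n b c (p1, p2) (i.1, i.2.1) *
      Rmat n a c (i.2.1, p3) (i.2.2, w) * Rmat n a b (i.1, i.2.2) (u, v) := by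
  simp only [Matrix.mul_apply, R12, R23, Matrix.of_apply, Fintype.sum_prod_type]
  simp [Finset.sum_mul]
  exact Finset.sum_congr rfl fun _ _ => Finset.sum_comm

lemma rhs_entry (n : ℕ) (a b c : ℂ) (p1 p2 p3 u v w : Fin n) :
    (R23 n a b * R12 n a c * R23 n b c) (p1, p2, p3) (u, v, w) =
    ∑ i : Fin n × Fin n × Fin n, Rmat n a b (p2, p3) (i.2.1, i.2.2) *
      Rmat n a c (p1, i.2.1) (u, i.1) * Rmat n b c (i.1, i.2.2) (v, w) := by
  simp only [Matrix.mul_apply, R12, R23, Matrix.of_apply, Fintype.sum_prod_type]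
  simp [Finset.sum_mul]
  exact Finset.sum_congr rfl fun _ _ => Finset.sum_comm

lemma qG_mul' (n u l m : ℕ) (hu : l + m ≤ u) (h : l + m < n) :
    qG n u l * qG n (u - l) m = qG n u ((l + m : ℕ) : ℤ) * qG n (l + m) l := by
  have a1 := qG_fac n u l
  have a2 := qG_fac n (u - l) m
  have a3 := qG_fac n u (l + m)
  have a4 := qG_fac n (l + m) l
  have a5 := qP_add n u l m
  have a6 := qP_add n ((l + m : ℕ) : ℂ) l m
  rw [Nat.cast_sub (by omega)] at a2
  rw [show ((l + m : ℕ) : ℂ) - l = m by push_cast; ring, ← qfac_eq, ← qfac_eq] at a6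
  have h1 := qfac_ne n l (by omega)
  have h2 := qfac_ne n m (by omega)
  apply mul_right_cancel₀ (mul_ne_zero h1 h2)
  rw [a6, ← a4] at a3
  calc _ = (qG n u l * qfac n l) * (qG n (u - l) m * qfac n m) := by ring
    _ = qP n u (l + m) := by rw [a1, a2, a5]
    _ = _ := by rw [← a3]; ring

def qC (n : ℕ) (a b c : ℂ) (u v w s t : ℕ) : ℂ :=
  qG n u t * qP n (2 * c - w) s *
    xic n (2 * (a - u) * (b - v) + 2 * (a - u) * (c - w) + 2 * (b - v) * (c - w)
      - t * (a - u) + s * (c - w) + (t - s) * (b - v) + t * s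
      - (t * t + s * s + t + s) / 2)

lemma xm3 (n : ℕ) (a b c d e : ℂ) (h : a + b + c = d + e) :
    xic n a * xic n b * xic n c = xic n d * xic n e := by
  rw [xm n a b _ rfl, xm n _ c _ rfl, xm n d e _ rfl, h]

lemma arrL (G1 G2 G3 P1 P2 P3 e1 e2 e3 K f A B : ℂ) (e : e1 * e2 * e3 = K * f)
    (g : G3 * G2 = A * B) : (G1 * P1 * e1) * (G2 * P2 * e2) * (G3 * P3 * e3) =
      (A * (P2 * P1) * K) * (B * G1 * f * P3) := by
  linear_combination G1 * P1 * P2 * P3 * (G3 * G2 * e + K * f * g)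

lemma arrR (G1 G2 G3 P1 P2 P3 e1 e2 e3 K f A B : ℂ) (e : e1 * e2 * e3 = K * f)
    (g : G2 * G1 = A * B) : (G1 * P1 * e1) * (G2 * P2 * e2) * (G3 * P3 * e3) =
      (A * (P3 * P2) * K) * (B * G3 * f * P1) := by
  linear_combination G3 * P1 * P2 * P3 * (G2 * G1 * e + K * f * g)

lemma lterm (n : ℕ) (a b c : ℂ) (u v w s t m : ℕ) (hu : u < n) (htu : t ≤ u)
    (hmt : m ≤ t) (hms : m ≤ s) :
    qRc n b c (v + t - m) (w + m) (s - m) * qRc n a c (u - t + m) w m * qRc n a b u v (t - m) =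
    qC n a b c u v w s t * (qG n t m * qG n (v + t - m) ((s : ℤ) - m) *
      xic n (-(m * (2 * b - v)) + (v + t - (s : ℤ)) * m - m * (m - 1) / 2)
        * qP n (2 * b - v) (t - m)) := by
  obtain ⟨i, rfl⟩ := Nat.exists_eq_add_of_le hmt
  obtain ⟨j, rfl⟩ := Nat.exists_eq_add_of_le hms
  have g := qG_mul n u i m (by omega) (by omega)
  have p := qP_add n (2 * c - w) m j
  rw [show u - i = u - (m + i) + m by omega, Nat.add_comm i m] at g
  unfold qRc qC
  rw [show v + (m + i) - m = v + i by omega, show m + j - m = j by omega,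
    show m + i - m = i by omega, show ((m + j : ℕ) : ℤ) - m = j by push_cast; ring, p,
    show 2 * c - ((w + m : ℕ) : ℂ) = 2 * c - w - m by push_cast; ring]
  have e := xm3 n
    (2 * (b - ((v + i : ℕ) : ℂ)) * (c - ((w + m : ℕ) : ℂ)) -
      j * (b - c - ((v + i : ℕ) : ℂ) + ((w + m : ℕ) : ℂ)) - j * (j + 1) / 2)
    (2 * (a - ((u - (m + i) + m : ℕ) : ℂ)) * (c - w) -
      m * (a - c - ((u - (m + i) + m : ℕ) : ℂ) + w) - m * (m + 1) / 2)
    (2 * (a - u) * (b - v) - i * (a - b - u + v) - i * (i + 1) / 2)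
    (2 * (a - u) * (b - v) + 2 * (a - u) * (c - w) + 2 * (b - v) * (c - w)
      - ((m + i : ℕ) : ℂ) * (a - u) + ((m + j : ℕ) : ℂ) * (c - w)
      + (((m + i : ℕ) : ℂ) - ((m + j : ℕ) : ℂ)) * (b - v) + ((m + i : ℕ) : ℂ) * ((m + j : ℕ) : ℂ)
      - (((m + i : ℕ) : ℂ) * ((m + i : ℕ) : ℂ) + ((m + j : ℕ) : ℂ) * ((m + j : ℕ) : ℂ)
        + ((m + i : ℕ) : ℂ) + ((m + j : ℕ) : ℂ)) / 2)
    (-(m * (2 * b - v)) + (v + ((m + i : ℕ) : ℂ) - (((m + j : ℕ) : ℤ) : ℂ)) * m - m * (m - 1) / 2)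
    (by push_cast [Nat.cast_sub htu]; ring)
  exact arrL _ _ _ _ _ _ _ _ _ _ _ _ _ e g

lemma rterm (n : ℕ) (a b c : ℂ) (u v w s t k : ℕ) (hu : u < n) (htu : t ≤ u)
    (hkt : k ≤ t) (hks : k ≤ s) (hv : s - k ≤ v) :
    qRc n a b (u - k) (v - (s - k)) (t - k) * qRc n a c u (w + (s - k)) k *
      qRc n b c v w (s - k) =
    qC n a b c u v w s t * (qG n t k * qG n v ((s : ℤ) - k) *
      xic n ((k * (2 * b - v)) - (v + t - (s : ℤ)) * k - k * (k - 1) / 2)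
        * qP n (2 * b - v + (s : ℤ) - k) (t - k)) := by
  obtain ⟨i, rfl⟩ := Nat.exists_eq_add_of_le hkt
  obtain ⟨j, rfl⟩ := Nat.exists_eq_add_of_le hks
  rw [show k + j - k = j by omega] at hv ⊢
  have g := qG_mul' n u k i (by omega) (by omega)
  have p := qP_add n (2 * c - w) j k
  rw [Nat.add_comm j k] at p
  unfold qRc qC
  rw [show k + i - k = i by omega, show ((k + j : ℕ) : ℤ) - k = j by push_cast; ring, p,
    show 2 * c - ((w + j : ℕ) : ℂ) = 2 * c - w - j by push_cast; ring,
    show 2 * b - v + (((k + j : ℕ) : ℤ) : ℂ) - k = 2 * b - ((v - j : ℕ) : ℂ) by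
      push_cast [Nat.cast_sub hv]; ring]
  have e := xm3 n
    (2 * (a - ((u - k : ℕ) : ℂ)) * (b - ((v - j : ℕ) : ℂ)) -
      i * (a - b - ((u - k : ℕ) : ℂ) + ((v - j : ℕ) : ℂ)) - i * (i + 1) / 2)
    (2 * (a - u) * (c - ((w + j : ℕ) : ℂ)) -
      k * (a - c - u + ((w + j : ℕ) : ℂ)) - k * (k + 1) / 2)
    (2 * (b - v) * (c - w) - j * (b - c - v + w) - j * (j + 1) / 2)
    (2 * (a - u) * (b - v) + 2 * (a - u) * (c - w) + 2 * (b - v) * (c - w)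
      - ((k + i : ℕ) : ℂ) * (a - u) + ((k + j : ℕ) : ℂ) * (c - w)
      + (((k + i : ℕ) : ℂ) - ((k + j : ℕ) : ℂ)) * (b - v) + ((k + i : ℕ) : ℂ) * ((k + j : ℕ) : ℂ)
      - (((k + i : ℕ) : ℂ) * ((k + i : ℕ) : ℂ) + ((k + j : ℕ) : ℂ) * ((k + j : ℕ) : ℂ)
        + ((k + i : ℕ) : ℂ) + ((k + j : ℕ) : ℂ)) / 2)
    (k * (2 * b - v) - (v + ((k + i : ℕ) : ℂ) - (((k + j : ℕ) : ℤ) : ℂ)) * k - k * (k - 1) / 2)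
    (by push_cast [Nat.cast_sub hv, Nat.cast_sub (show k ≤ u by omega)]; ring)
  exact arrR _ _ _ _ _ _ _ _ _ _ _ _ _ e g

lemma lhs_sum (n : ℕ) (hn : 2 ≤ n) (a b c : ℂ) (p1 p2 p3 u v w : Fin n) (s t : ℕ)
    (hs : (p1 : ℕ) = w + s) (ht : (u : ℕ) = p3 + t) (h : (p1 : ℕ) + p2 + p3 = u + v + w) :
    (R12 n b c * R23 n a c * R12 n a b) (p1, p2, p3) (u, v, w) =
    qC n a b c u v w s t * qL n t v s (2 * b - ((v : ℕ) : ℂ)) := by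
  rw [lhs_entry]
  simp only [Rmat_eq]
  rw [← Finset.sum_filter_of_ne (p := fun i : Fin n × Fin n × Fin n =>
    (((p1 : ℕ) + p2 = i.1 + i.2.1 ∧ (i.2.1 : ℕ) ≤ p1) ∧
    ((i.2.1 : ℕ) + p3 = i.2.2 + w ∧ (w : ℕ) ≤ i.2.1)) ∧
    ((i.1 : ℕ) + i.2.2 = u + v ∧ (v : ℕ) ≤ i.1))]
  · unfold qL
    rw [Finset.mul_sum]
    refine Finset.sum_of_injOn (fun i => (i.2.1 : ℕ) - w) ?_ ?_ ?_ ?_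
    · rintro ⟨x, y, z⟩ h1 ⟨x', y', z'⟩ h2 h3
      simp at h1 h2 h3
      simp only [Prod.mk.injEq, Fin.ext_iff]
      omega
    · rintro ⟨x, y, z⟩ h1
      simp at h1 ⊢
      omega
    · intro m hm hnot
      simp only [Finset.mem_range, Set.mem_image, not_exists] at hm hnot
      suffices hz : qG n (v + t - m) ((s : ℤ) - m) = 0 by rw [hz]; ring
      by_cases hms : m ≤ s
      · by_cases hv : (v : ℕ) + t - m < n
        · exfalso
          refine hnot (⟨v + t - m, hv⟩, ⟨w + m, by omega⟩, ⟨p3 + m, by omega⟩) ⟨?_, ?_⟩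
          · simp only [Finset.coe_filter, Finset.mem_univ, true_and, Set.mem_setOf_eq]
            omega
          · simp
        · rw [show (s : ℤ) - m = ((s - m : ℕ) : ℤ) by omega]
          exact qG_vanish n _ _ hn (by omega) (by omega) (by omega)
      · exact qG_neg _ _ _ (by omega)
    · rintro ⟨x, y, z⟩ h1
      simp only [Finset.mem_filter, Finset.mem_univ, true_and] at h1
      rw [if_pos h1.1.1, if_pos h1.1.2, if_pos h1.2]
      dsimp only at h1 ⊢
      obtain ⟨m, hm⟩ := Nat.exists_eq_add_of_le h1.1.2.2
      rw [← lterm n a b c u v w s t _ u.2 (by omega) (by omega) (by omega)]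
      rw [show (y : ℕ) - w = m by omega, hm, show (x : ℕ) = v + t - m by omega,
        show (z : ℕ) = u - t + m by omega, show (p1 : ℕ) - (w + m) = s - m by omega,
        show (v : ℕ) + t - m - v = t - m by omega]
  · rintro ⟨x, y, z⟩ - hne
    simp only [ne_eq, mul_eq_zero, not_or, ite_eq_right_iff, Classical.not_imp] at hne
    exact ⟨⟨hne.1.1.1, hne.1.2.1⟩, hne.2.1⟩

lemma rhs_sum (n : ℕ) (hn : 2 ≤ n) (a b c : ℂ) (p1 p2 p3 u v w : Fin n) (s t : ℕ)
    (hs : (p1 : ℕ) = w + s) (ht : (u : ℕ) = p3 + t) (h : (p1 : ℕ) + p2 + p3 = u + v + w) :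
    (R23 n a b * R12 n a c * R23 n b c) (p1, p2, p3) (u, v, w) =
    qC n a b c u v w s t * qR n t v s (2 * b - ((v : ℕ) : ℂ)) := by
  rw [rhs_entry]
  simp only [Rmat_eq]
  rw [← Finset.sum_filter_of_ne (p := fun i : Fin n × Fin n × Fin n =>
    (((p2 : ℕ) + p3 = i.2.1 + i.2.2 ∧ (i.2.2 : ℕ) ≤ p2) ∧
    ((p1 : ℕ) + i.2.1 = u + i.1 ∧ (i.1 : ℕ) ≤ p1)) ∧
    ((i.1 : ℕ) + i.2.2 = v + w ∧ (w : ℕ) ≤ i.1))]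
  · unfold qR
    rw [Finset.mul_sum]
    refine Finset.sum_of_injOn (fun i => (p1 : ℕ) - i.1) ?_ ?_ ?_ ?_
    · rintro ⟨x, y, z⟩ h1 ⟨x', y', z'⟩ h2 h3
      simp at h1 h2 h3
      simp only [Prod.mk.injEq, Fin.ext_iff]
      omega
    · rintro ⟨x, y, z⟩ h1
      simp at h1 ⊢
      omega
    · intro m hm hnot
      simp only [Finset.mem_range, Set.mem_image, not_exists] at hm hnot
      suffices hz : qG n v ((s : ℤ) - m) = 0 by rw [hz]; ring
      by_cases hms : m ≤ s
      · by_cases hv : s - m ≤ (v : ℕ)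
        · exfalso
          refine hnot (⟨w + (s - m), by omega⟩, ⟨u - m, by omega⟩, ⟨v - (s - m), by omega⟩) ⟨?_, ?_⟩
          · simp only [Finset.coe_filter, Finset.mem_univ, true_and, Set.mem_setOf_eq]
            omega
          · simp
            omega
        · exact qG_gt _ _ _ (by omega)
      · exact qG_neg _ _ _ (by omega)
    · rintro ⟨x, y, z⟩ h1
      simp only [Finset.mem_filter, Finset.mem_univ, true_and] at h1
      rw [if_pos h1.1.1, if_pos h1.1.2, if_pos h1.2]
      dsimp only at h1 ⊢
      obtain ⟨m, hm⟩ := Nat.exists_eq_add_of_le h1.1.2.2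
      rw [← rterm n a b c u v w s t _ u.2 (by omega) (by omega) (by omega) (by omega)]
      rw [show (p1 : ℕ) - x = m by omega, show (x : ℕ) = w + (s - m) by omega,
        show (z : ℕ) = v - (s - m) by omega, show (y : ℕ) = u - m by omega,
        show (p2 : ℕ) - (v - (s - m)) = t - m by omega,
        show (w : ℕ) + (s - m) - w = s - m by omega]
  · rintro ⟨x, y, z⟩ - hne
    simp only [ne_eq, mul_eq_zero, not_or, ite_eq_right_iff, Classical.not_imp] at hne
    exact ⟨⟨hne.1.1.1, hne.1.2.1⟩, hne.2.1⟩

theorem Rmat_yang_baxter (n : ℕ) (hn : 2 ≤ n) (a b c : ℂ)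
    (ha : NotHalfInt a) (hb : NotHalfInt b) (hc : NotHalfInt c) :
    R12 n b c * R23 n a c * R12 n a b = R23 n a b * R12 n a c * R23 n b c := by
  ext ⟨p1, p2, p3⟩ ⟨u, v, w⟩
  by_cases h : (p1 : ℕ) + p2 + p3 = u + v + w ∧ (w : ℕ) ≤ p1 ∧ (p3 : ℕ) ≤ u
  · obtain ⟨h1, h2, h3⟩ := h
    obtain ⟨s, hs⟩ := Nat.exists_eq_add_of_le h2
    obtain ⟨t, ht⟩ := Nat.exists_eq_add_of_le h3
    rw [lhs_sum n hn a b c p1 p2 p3 u v w s t hs ht h1,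
      rhs_sum n hn a b c p1 p2 p3 u v w s t hs ht h1, qL_eq_qR]
  · rw [lhs_entry, rhs_entry]
    simp only [Rmat_eq]
    rw [Finset.sum_eq_zero, Finset.sum_eq_zero]
    · rintro ⟨x, y, z⟩ -
      dsimp only
      split_ifs <;> first | (exfalso; omega) | simp
    · rintro ⟨x, y, z⟩ -
      dsimp only
      split_ifs <;> first | (exfalso; omega) | simp

end
end

section
/- Let a, b, c ∈ ℂ \ (1/2)ℤ with a+b−c ∈ {0,1,…,n−1}. Then the map Y_c^{a,b} : V^c → V^a ⊗ V^b is a U_ξ(sl_2)-module map, i.e. Y_c^{a,b} ∘ E_c = (E_a ⊗ K_b + K_a^{−1} ⊗ E_b) ∘ Y_c^{a,b}, Y_c^{a,b} ∘ F_c = (F_a ⊗ K_b + K_a^{−1} ⊗ F_b) ∘ Y_c^{a,b}, and Y_c^{a,b} ∘ K_c = (K_a ⊗ K_b) ∘ Y_c^{a,b}. Moreover, if in addition a+b ∉ (1/2)ℤ, then every linear map ι : V^c → V^a ⊗ V^b satisfying these same three intertwining relations (with ι in place of Y_c^{a,b}) is a scalar multiple of Y_c^{a,b}. -/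
open Complex Finset Filter
open scoped Matrix Kronecker Real

noncomputable section

lemma xic_add (n : ℕ) (x y : ℂ) : xic n (x + y) = xic n x * xic n y := by
  unfold xic
  rw [← Complex.exp_add]
  congr 1
  ring

lemma xic_ne (n : ℕ) (x : ℂ) : xic n x ≠ 0 := Complex.exp_ne_zero _

lemma qn_zero (n : ℕ) : qn n 0 = 0 := by simp [qn]

lemma qn_eq_zero (n : ℕ) (hn : 2 ≤ n) (x : ℂ) (h : qn n x = 0) :
    ∃ m : ℤ, x = (m : ℂ) * n := by
  unfold qn xic at h
  rw [sub_eq_zero, Complex.exp_eq_exp_iff_exists_int] at h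
  obtain ⟨m, hm⟩ := h
  refine ⟨m, ?_⟩
  have hn0 : (n : ℂ) ≠ 0 := by
    have : n ≠ 0 := by omega
    exact_mod_cast this
  have hpi : (Real.pi : ℂ) ≠ 0 := by exact_mod_cast Real.pi_ne_zero
  have hI := Complex.I_ne_zero
  field_simp at hm
  have h2 : (2 : ℂ) ≠ 0 := two_ne_zero
  have : (2 : ℂ) * x = 2 * (m * n) := by linear_combination hm
  exact mul_left_cancel₀ h2 this

lemma qn_n (n : ℕ) (hn : 2 ≤ n) : qn n (n : ℂ) = 0 := by
  unfold qn xic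
  have hn0 : (n : ℂ) ≠ 0 := by
    have : n ≠ 0 := by omega
    exact_mod_cast this
  rw [sub_eq_zero, Complex.exp_eq_exp_iff_exists_int]
  refine ⟨1, ?_⟩
  field_simp
  push_cast
  ring

lemma qn_nat_ne (n : ℕ) (hn : 2 ≤ n) (m : ℕ) (h0 : 0 < m) (h1 : m < n) : qn n (m : ℂ) ≠ 0 := by
  intro h
  obtain ⟨r, hr⟩ := qn_eq_zero n hn _ h
  have hr' : (m : ℤ) = r * n := by exact_mod_cast hr
  have : r ≤ 0 ∨ 1 ≤ r := by omega
  rcases this with h | h <;> nlinarith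

lemma qn_half_ne (n : ℕ) (hn : 2 ≤ n) (a : ℂ) (ha : NotHalfInt a) (m : ℤ) :
    qn n (2 * a + m) ≠ 0 := by
  intro h
  obtain ⟨r, hr⟩ := qn_eq_zero n hn _ h
  apply ha (r * n - m)
  push_cast
  linear_combination hr / 2

lemma qbin_eq_s5 (n : ℕ) (x y : ℂ) (m : ℕ) (hm : m < n) (h : x - y = m) :
    qbin n x y = ∏ j ∈ Finset.range m, qn n (x - (j : ℂ)) / qn n ((m : ℂ) - (j : ℂ)) := by
  unfold qbin
  have hex : ∃ k : ℕ, k < n ∧ x - y = (k : ℂ) := ⟨m, hm, h⟩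
  rw [dif_pos hex]
  have hch : hex.choose = m := by
    have := h.symm.trans hex.choose_spec.2
    exact_mod_cast this.symm
  rw [hch, h]

/-- rising product quotient -/
def Rq (n : ℕ) (x : ℂ) (m : ℕ) : ℂ := qbin n (x + m) x

lemma Rq_eq (n : ℕ) (x : ℂ) (m : ℕ) (hm : m < n) :
    Rq n x m = ∏ j ∈ Finset.range m, qn n (x + (j : ℂ) + 1) / qn n ((j : ℂ) + 1) := by
  unfold Rq
  rw [qbin_eq_s5 n _ _ m hm (by ring), ← Finset.prod_range_reflect]
  apply Finset.prod_congr rfl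
  intro j hj
  have hj' := Finset.mem_range.1 hj
  have e : ((m - 1 - j : ℕ) : ℂ) = (m : ℂ) - 1 - j := by
    rw [Nat.cast_sub (by omega), Nat.cast_sub (by omega)]; simp
  rw [e]
  congr 2 <;> ring

lemma Rq_zero (n : ℕ) (hn : 2 ≤ n) (x : ℂ) : Rq n x 0 = 1 := by
  rw [Rq_eq n x 0 (by omega)]; simp

lemma Rq_succ (n : ℕ) (hn : 2 ≤ n) (x : ℂ) (m : ℕ) (hm : m + 1 < n) :
    qn n ((m : ℂ) + 1) * Rq n x (m + 1) = qn n (x + 1) * Rq n (x + 1) m := by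
  rw [Rq_eq n x (m + 1) hm, Rq_eq n (x + 1) m (by omega), Finset.prod_div_distrib,
    Finset.prod_div_distrib, Finset.prod_range_succ', Finset.prod_range_succ (fun j : ℕ => qn n ((j : ℂ) + 1))]
  have hne : qn n ((m : ℂ) + 1) ≠ 0 := by
    have := qn_nat_ne n hn (m + 1) (by omega) hm
    push_cast at this; exact this
  have hP : ∏ j ∈ Finset.range m, qn n ((j : ℂ) + 1) ≠ 0 := by
    rw [Finset.prod_ne_zero_iff]
    intro j hj
    have := qn_nat_ne n hn (j + 1) (by omega) (by have := Finset.mem_range.1 hj; omega)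
    push_cast at this; exact this
  have e : ∏ j ∈ Finset.range m, qn n (x + ((j + 1 : ℕ) : ℂ) + 1)
      = ∏ j ∈ Finset.range m, qn n (x + 1 + (j : ℂ) + 1) := by
    apply Finset.prod_congr rfl
    intro j _
    congr 1
    push_cast; ring
  rw [e]
  simp only [Nat.cast_zero, add_zero]
  field_simp

lemma qbin_neg (n : ℕ) (k : ℕ) (m : ℤ) (h : m < 0 ∨ (k : ℤ) < m) : qbin n (k : ℂ) (m : ℂ) = 0 := by
  by_cases hex : ∃ r : ℕ, r < n ∧ (k : ℂ) - (m : ℂ) = (r : ℂ)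
  · obtain ⟨r, hr, e⟩ := hex
    have e' : (k : ℤ) - m = r := by exact_mod_cast e
    rw [qbin_eq_s5 n _ _ r hr e]
    apply Finset.prod_eq_zero (i := k)
    · rw [Finset.mem_range]; omega
    · simp [qn_zero]
  · unfold qbin
    rw [dif_neg hex]

lemma qbin_top (n : ℕ) (c : ℂ) (t : ℕ) (ht : t < n) :
    qbin n (2 * c) (2 * c - t) = ∏ j ∈ Finset.range t, qn n (2 * c - (j : ℂ)) / qn n ((j : ℂ) + 1) := by
  rw [qbin_eq_s5 n _ _ t ht (by ring), Finset.prod_div_distrib, Finset.prod_div_distrib]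
  congr 1
  rw [← Finset.prod_range_reflect]
  apply Finset.prod_congr rfl
  intro j hj
  have hj' := Finset.mem_range.1 hj
  have e : ((t - 1 - j : ℕ) : ℂ) = (t : ℂ) - 1 - j := by
    rw [Nat.cast_sub (by omega), Nat.cast_sub (by omega)]; simp
  rw [e]
  congr 1
  ring

lemma qbin_top_succ (n : ℕ) (hn : 2 ≤ n) (c : ℂ) (hc : NotHalfInt c) (t : ℕ) (ht : t + 1 < n) :
    qn n (2 * c - t) * (qbin n (2 * c) (2 * c - ((t + 1 : ℕ) : ℂ)))⁻¹
      = qn n ((t : ℂ) + 1) * (qbin n (2 * c) (2 * c - t))⁻¹ := by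
  rw [qbin_top n c (t + 1) ht, qbin_top n c t (by omega), Finset.prod_range_succ]
  have h1 : qn n ((t : ℂ) + 1) ≠ 0 := by
    have := qn_nat_ne n hn (t + 1) (by omega) ht
    push_cast at this; exact this
  have h2 : qn n (2 * c - t) ≠ 0 := by
    have := qn_half_ne n hn c hc (-(t : ℤ))
    push_cast at this
    rwa [← sub_eq_add_neg] at this
  rw [mul_inv, inv_div]
  field_simp

lemma qbin_nz (n : ℕ) (hn : 2 ≤ n) (c : ℂ) (hc : NotHalfInt c) (y : ℂ) (m : ℕ) (hm : m < n)
    (h : 2 * c - y = m) : qbin n (2 * c) y ≠ 0 := by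
  have : y = 2 * c - m := by linear_combination -h
  rw [this, qbin_top n c m hm, Finset.prod_ne_zero_iff]
  intro j hj
  have hj' := Finset.mem_range.1 hj
  apply div_ne_zero
  · have := qn_half_ne n hn c hc (-(j : ℤ))
    push_cast at this
    rwa [← sub_eq_add_neg] at this
  · have := qn_nat_ne n hn (j + 1) (by omega) (by omega)
    push_cast at this; exact this

/-- summand of the sum in CG -/
def Tm (n : ℕ) (k : ℕ) (a b c : ℂ) (u v : ℤ) (t z : ℕ) : ℂ :=
  (-1 : ℂ) ^ z * xic n ((2 * (z : ℂ) - (t : ℂ)) * (2 * c - (t : ℂ) + 1) / 2) *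
    qbin n (k : ℂ) ((u - z : ℤ) : ℂ) * Rq n (2 * a - u) z * Rq n (2 * b - v) (t - z)

def Sm (n : ℕ) (k : ℕ) (a b c : ℂ) (u v : ℤ) (t : ℕ) : ℂ :=
  ∑ z ∈ Finset.range (t + 1), Tm n k a b c u v t z

lemma Sm_rec (n : ℕ) (hn : 2 ≤ n) (k : ℕ) (a b c : ℂ) (u v : ℤ) (t : ℕ)
    (ht : t + 1 ≤ n) (hu : u < n) (hv : v < n) (huv : u + v = t + 1 + k) :
    qn n ((t : ℂ) + 1) * Sm n k a b c u v (t + 1)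
      = -xic n (c - t) * qn n (2 * a - u + 1) * Sm n k a b c (u - 1) v t
        + xic n (-(c - t)) * qn n (2 * b - v + 1) * Sm n k a b c u (v - 1) t := by
  have key1 : ∀ z : ℕ, z + 1 ≤ n →
      qbin n (k : ℂ) ((u - (z + 1 : ℕ) : ℤ) : ℂ) * (qn n (2 * a - u + 1) * Rq n (2 * a - u + 1) z)
      = qbin n (k : ℂ) ((u - (z + 1 : ℕ) : ℤ) : ℂ) * (qn n ((z : ℂ) + 1) * Rq n (2 * a - u) (z + 1)) := by
    intro z hz
    by_cases h : z + 1 < n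
    · rw [Rq_succ n hn _ z h]
    · rw [qbin_neg n k _ (by left; omega)]; simp
  have key2 : ∀ z w : ℕ, z + w = t →
      qbin n (k : ℂ) ((u - z : ℤ) : ℂ) * (qn n (2 * b - v + 1) * Rq n (2 * b - v + 1) w)
      = qbin n (k : ℂ) ((u - z : ℤ) : ℂ) * (qn n ((w : ℂ) + 1) * Rq n (2 * b - v) (w + 1)) := by
    intro z w hz
    by_cases h : w + 1 < n
    · rw [Rq_succ n hn _ w h]
    · rw [qbin_neg n k _ (by right; omega)]; simp
  set G : ℕ → ℂ := fun z => (-1 : ℂ) ^ z * qbin n (k : ℂ) ((u - z : ℤ) : ℂ) * Rq n (2 * a - u) z *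
    Rq n (2 * b - v) (t + 1 - z) * xic n ((2 * (z : ℂ) - (t + 1)) * (2 * c - t) / 2) with hG
  have e1 : -xic n (c - t) * qn n (2 * a - u + 1) * Sm n k a b c (u - 1) v t
      = ∑ z ∈ Finset.range (t + 2), G z * (qn n z * xic n (z - (t + 1))) := by
    rw [Finset.sum_range_succ', Sm, Finset.mul_sum]
    simp only [Nat.cast_zero, qn_zero, zero_mul, mul_zero, add_zero]
    apply Finset.sum_congr rfl
    intro z hz
    have hz' := Finset.mem_range.1 hz
    have hk := key1 z (by omega)
    have hx : xic n (c - t) * xic n ((2 * (z : ℂ) - (t : ℂ)) * (2 * c - (t : ℂ) + 1) / 2)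
      = xic n ((2 * ((z + 1 : ℕ) : ℂ) - (t + 1)) * (2 * c - t) / 2) * xic n (((z + 1 : ℕ) : ℂ) - (t + 1)) := by
      rw [← xic_add, ← xic_add]
      congr 1
      push_cast
      ring
    have i1 : u - 1 - (z : ℤ) = u - ((z + 1 : ℕ) : ℤ) := by push_cast; ring
    have i2 : 2 * a - ((u - 1 : ℤ) : ℂ) = 2 * a - u + 1 := by push_cast; ring
    have i3 : t + 1 - (z + 1) = t - z := by omega
    simp only [Tm, hG]
    rw [i1, i2, i3]
    rw [show qn n (((z + 1 : ℕ) : ℂ)) = qn n ((z : ℂ) + 1) by push_cast; rfl]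
    rw [pow_succ]
    linear_combination (-(-1 : ℂ) ^ z * Rq n (2 * b - v) (t - z)) *
      (xic n (c - t) * xic n ((2 * (z : ℂ) - (t : ℂ)) * (2 * c - (t : ℂ) + 1) / 2) * hk +
        (qbin n (k : ℂ) ((u - (z + 1 : ℕ) : ℤ) : ℂ) * (qn n ((z : ℂ) + 1) * Rq n (2 * a - u) (z + 1))) * hx)
  have e2 : xic n (-(c - t)) * qn n (2 * b - v + 1) * Sm n k a b c u (v - 1) t
      = ∑ z ∈ Finset.range (t + 2), G z * (qn n ((t : ℂ) + 1 - z) * xic n z) := by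
    rw [Finset.sum_range_succ, Sm, Finset.mul_sum]
    have : qn n ((t : ℂ) + 1 - ((t + 1 : ℕ) : ℂ)) = 0 := by
      rw [← qn_zero n]; congr 1; push_cast; ring
    rw [this]
    simp only [zero_mul, mul_zero, add_zero]
    apply Finset.sum_congr rfl
    intro z hz
    have hz' := Finset.mem_range.1 hz
    have hk := key2 z (t - z) (by omega)
    have hx : xic n (-(c - t)) * xic n ((2 * (z : ℂ) - (t : ℂ)) * (2 * c - (t : ℂ) + 1) / 2)
      = xic n ((2 * (z : ℂ) - (t + 1)) * (2 * c - t) / 2) * xic n z := by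
      rw [← xic_add, ← xic_add]
      congr 1
      ring
    have i2 : 2 * b - ((v - 1 : ℤ) : ℂ) = 2 * b - v + 1 := by push_cast; ring
    have i3 : t + 1 - z = t - z + 1 := by omega
    have i4 : ((t - z : ℕ) : ℂ) + 1 = (t : ℂ) + 1 - z := by
      rw [Nat.cast_sub (by omega)]; ring
    rw [i4] at hk
    simp only [Tm, hG]
    rw [i2, i3]
    linear_combination ((-1 : ℂ) ^ z * Rq n (2 * a - u) z) *
      (xic n (-(c - t)) * xic n ((2 * (z : ℂ) - (t : ℂ)) * (2 * c - (t : ℂ) + 1) / 2) * hk +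
        (qbin n (k : ℂ) ((u - z : ℤ) : ℂ) * (qn n ((t : ℂ) + 1 - z) * Rq n (2 * b - v) (t - z + 1))) * hx)
  rw [e1, e2, ← Finset.sum_add_distrib, Sm, Finset.mul_sum]
  apply Finset.sum_congr rfl
  intro z hz
  have hz' := Finset.mem_range.1 hz
  have hq : qn n ((t : ℂ) + 1) = qn n z * xic n (z - (t + 1)) + qn n ((t : ℂ) + 1 - z) * xic n z := by
    unfold qn
    rw [sub_mul, sub_mul, ← xic_add, ← xic_add, ← xic_add, ← xic_add]
    rw [show (z : ℂ) + (z - (t + 1)) = -((t : ℂ) + 1 - z) + z by ring,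
      show -(z : ℂ) + (z - (t + 1)) = -((t : ℂ) + 1) by ring,
      show (t : ℂ) + 1 - z + z = t + 1 by ring]
    ring
  have hx : (2 * (z : ℂ) - ((t + 1 : ℕ) : ℂ)) * (2 * c - ((t + 1 : ℕ) : ℂ) + 1) / 2
      = (2 * (z : ℂ) - (t + 1)) * (2 * c - t) / 2 := by push_cast; ring
  simp only [Tm, hG]
  rw [← mul_add, ← hq, hx]
  ring

/-- CG coefficient with integer indices -/
def CZ (n : ℕ) (k : ℕ) (a b c : ℂ) (u v : ℤ) (t : ℕ) : ℂ :=
  Complex.exp (Real.pi * Complex.I * (c - a - b) / 2) *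
  (-1 : ℂ) ^ (v - (t : ℤ)) *
  xic n (((v : ℂ) * (2 * b - (v : ℂ) + 1) - (u : ℂ) * (2 * a - (u : ℂ) + 1)) / 2) *
  (qbin n (2 * c) (2 * c - (t : ℂ)))⁻¹ *
  qbin n (2 * c) (a + b + c - ((n : ℂ) - 1)) * Sm n k a b c u v t

lemma CG_eq (n : ℕ) (k : ℕ) (a b c : ℂ) (h : a + b - c = k) (u v t : ℕ) :
    CG n a b c u v t = CZ n k a b c u v t := by
  unfold CG CZ Sm
  simp only [Int.cast_natCast]
  congr 1
  apply Finset.sum_congr rfl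
  intro z hz
  have hz' := Finset.mem_range.1 hz
  simp only [Tm, Rq]
  rw [h, Nat.cast_sub (by omega)]
  push_cast
  rfl

lemma CZ_u_neg (n : ℕ) (k : ℕ) (a b c : ℂ) (v : ℤ) (t : ℕ) : CZ n k a b c (-1) v t = 0 := by
  unfold CZ
  rw [Sm, Finset.sum_eq_zero, mul_zero]
  intro z _
  rw [Tm, qbin_neg n k _ (by left; omega)]
  ring

lemma CZ_v_neg (n : ℕ) (k : ℕ) (a b c : ℂ) (u : ℤ) (t : ℕ) (hu : u = t + 1 + k) :
    CZ n k a b c u (-1) t = 0 := by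
  unfold CZ
  rw [Sm, Finset.sum_eq_zero, mul_zero]
  intro z hz
  have hz' := Finset.mem_range.1 hz
  rw [Tm, qbin_neg n k _ (by right; omega)]
  ring

lemma CZ_rec (n : ℕ) (hn : 2 ≤ n) (k : ℕ) (a b c : ℂ) (hc : NotHalfInt c) (h : a + b - c = k)
    (u v : ℤ) (t : ℕ)
    (ht : t + 1 ≤ n) (hu : u < n) (hv : v < n) (huv : u + v = t + 1 + k) :
    (if t + 1 < n then qn n (2 * c - t) * CZ n k a b c u v (t + 1) else 0)
      = xic n (b - v) * qn n (2 * a - u + 1) * CZ n k a b c (u - 1) v t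
        + xic n (-(a - u)) * qn n (2 * b - v + 1) * CZ n k a b c u (v - 1) t := by
  have hrec := Sm_rec n hn k a b c u v t ht hu hv huv
  set X := xic n (((v : ℂ) * (2 * b - (v : ℂ) + 1) - (u : ℂ) * (2 * a - (u : ℂ) + 1)) / 2) with hX
  have huv' : (u : ℂ) + v = t + 1 + k := by exact_mod_cast huv
  have hx1 : xic n (b - v) * xic n (((v : ℂ) * (2 * b - (v : ℂ) + 1) - ((u - 1 : ℤ) : ℂ) * (2 * a - ((u - 1 : ℤ) : ℂ) + 1)) / 2) = X * xic n (c - t) := by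
    rw [hX, ← xic_add, ← xic_add]
    congr 1
    push_cast
    linear_combination h - huv'
  have hx2 : xic n (-(a - u)) * xic n ((((v - 1 : ℤ) : ℂ) * (2 * b - ((v - 1 : ℤ) : ℂ) + 1) - (u : ℂ) * (2 * a - (u : ℂ) + 1)) / 2) = X * xic n (-(c - t)) := by
    rw [hX, ← xic_add, ← xic_add]
    congr 1
    push_cast
    linear_combination -h + huv'
  have s1 : (-1 : ℂ) ^ (v - 1 - (t : ℤ)) = -(-1 : ℂ) ^ (v - (t : ℤ)) := by
    rw [show v - (t : ℤ) = (v - 1 - t) + 1 by ring, zpow_add₀ (by norm_num)]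
    simp
  have s2 : (-1 : ℂ) ^ (v - ((t + 1 : ℕ) : ℤ)) = -(-1 : ℂ) ^ (v - (t : ℤ)) := by
    rw [← s1]; congr 1; push_cast; ring
  have L : (if t + 1 < n then qn n (2 * c - t) * CZ n k a b c u v (t + 1) else 0)
      = Complex.exp (Real.pi * Complex.I * (c - a - b) / 2) * (-(-1 : ℂ) ^ (v - (t : ℤ))) * X *
      (qbin n (2 * c) (2 * c - (t : ℂ)))⁻¹ * qbin n (2 * c) (a + b + c - ((n : ℂ) - 1)) *
      (qn n ((t : ℂ) + 1) * Sm n k a b c u v (t + 1)) := by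
    split_ifs with hlt
    · have := qbin_top_succ n hn c hc t hlt
      rw [CZ, ← hX, s2]
      linear_combination (Complex.exp (Real.pi * Complex.I * (c - a - b) / 2) * (-(-1 : ℂ) ^ (v - (t : ℤ))) * X * qbin n (2 * c) (a + b + c - ((n : ℂ) - 1)) * Sm n k a b c u v (t + 1)) * this
    · have e : t + 1 = n := by omega
      have e' : (t : ℂ) + 1 = n := by exact_mod_cast e
      rw [e', qn_n n hn]
      ring
  rw [L, hrec, CZ, CZ, s1]
  linear_combination (-(Complex.exp (Real.pi * Complex.I * (c - a - b) / 2) * ((-1 : ℂ) ^ (v - (t : ℤ))) *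
      (qbin n (2 * c) (2 * c - (t : ℂ)))⁻¹ * qbin n (2 * c) (a + b + c - ((n : ℂ) - 1)))) *
      (qn n (2 * a - u + 1) * Sm n k a b c (u - 1) v t * hx1
        - qn n (2 * b - v + 1) * Sm n k a b c u (v - 1) t * hx2)

lemma xic_inj (n : ℕ) (hn : 2 ≤ n) (x y : ℂ) (h : xic n x = xic n y) :
    ∃ m : ℤ, x = y + 2 * n * m := by
  unfold xic at h
  rw [Complex.exp_eq_exp_iff_exists_int] at h
  obtain ⟨m, hm⟩ := h
  refine ⟨m, ?_⟩
  have hn0 : (n : ℂ) ≠ 0 := by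
    have : n ≠ 0 := by omega
    exact_mod_cast this
  have hpi : (Real.pi : ℂ) ≠ 0 := by exact_mod_cast Real.pi_ne_zero
  have hI := Complex.I_ne_zero
  field_simp at hm
  linear_combination hm

lemma mulF {ι : Type*} (n : ℕ) (c : ℂ) (X : Matrix ι (Fin n) ℂ) (p : ι) (t : Fin n) :
    (X * Fmat n c) p t
      = if h : (t : ℕ) + 1 < n then X p ⟨t + 1, h⟩ * qint n (2 * c - (t : ℕ)) else 0 := by
  rw [Matrix.mul_apply]
  split_ifs with h
  · rw [Finset.sum_eq_single ⟨t + 1, h⟩]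
    · simp [Fmat]
    · intro s _ hs
      have : ¬ ((s : ℕ) = t + 1) := fun e => hs (Fin.ext e)
      simp [Fmat, this]
    · simp
  · apply Finset.sum_eq_zero
    intro s _
    have : ¬ ((s : ℕ) = t + 1) := by have := s.2; omega
    simp [Fmat, this]

lemma mulE {ι : Type*} (n : ℕ) (X : Matrix ι (Fin n) ℂ) (p : ι) (t : Fin n) :
    (X * Emat n) p t
      = if h : 0 < (t : ℕ) then X p ⟨t - 1, by omega⟩ * qint n ((t : ℕ) : ℂ) else 0 := by
  rw [Matrix.mul_apply]
  split_ifs with h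
  · rw [Finset.sum_eq_single ⟨t - 1, by omega⟩]
    · have : (t : ℕ) = t - 1 + 1 := by omega
      simp only [Emat, Matrix.of_apply]
      rw [if_pos this]
    · intro s _ hs
      have : ¬ ((t : ℕ) = s + 1) := fun e => hs (Fin.ext (by simp; omega))
      simp [Emat, this]
    · simp
  · apply Finset.sum_eq_zero
    intro s _
    have : ¬ ((t : ℕ) = s + 1) := by omega
    simp [Emat, this]

lemma FKmul {κ : Type*} (n : ℕ) (a b : ℂ) (X : Matrix (Fin n × Fin n) κ ℂ) (u v : Fin n) (t : κ) :
    ((Fmat n a ⊗ₖ Kmat n b) * X) (u, v) t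
      = if h : 0 < (u : ℕ) then qint n (2 * a - (u : ℕ) + 1) * xic n (b - (v : ℕ)) *
          X (⟨u - 1, by omega⟩, v) t else 0 := by
  rw [Matrix.mul_apply]
  split_ifs with h
  · rw [Finset.sum_eq_single (⟨u - 1, by omega⟩, v)]
    · have e : (u : ℕ) = u - 1 + 1 := by omega
      have e' : 2 * a - ((u - 1 : ℕ) : ℂ) = 2 * a - (u : ℕ) + 1 := by
        rw [Nat.cast_sub (by omega)]; push_cast; ring
      simp only [Matrix.kroneckerMap_apply, Fmat, Kmat, Matrix.of_apply, if_true]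
      rw [if_pos e, e']
    · rintro ⟨u', v'⟩ _ hs
      simp only [Matrix.kroneckerMap_apply, Fmat, Kmat, Matrix.of_apply]
      by_cases h1 : (u : ℕ) = u' + 1
      · have h2 : ¬ (v = v') := by
          rintro rfl
          exact hs (Prod.ext (Fin.ext (by simp; omega)) rfl)
        simp [h2]
      · simp [h1]
    · simp
  · apply Finset.sum_eq_zero
    rintro ⟨u', v'⟩ _
    have : ¬ ((u : ℕ) = u' + 1) := by omega
    simp [Fmat, this]

lemma KFmul {κ : Type*} (n : ℕ) (a b : ℂ) (X : Matrix (Fin n × Fin n) κ ℂ) (u v : Fin n) (t : κ) :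
    ((Kinvmat n a ⊗ₖ Fmat n b) * X) (u, v) t
      = if h : 0 < (v : ℕ) then xic n (-(a - (u : ℕ))) * qint n (2 * b - (v : ℕ) + 1) *
          X (u, ⟨v - 1, by omega⟩) t else 0 := by
  rw [Matrix.mul_apply]
  split_ifs with h
  · rw [Finset.sum_eq_single (u, ⟨v - 1, by omega⟩)]
    · have e : (v : ℕ) = v - 1 + 1 := by omega
      have e' : 2 * b - ((v - 1 : ℕ) : ℂ) = 2 * b - (v : ℕ) + 1 := by
        rw [Nat.cast_sub (by omega)]; push_cast; ring
      simp only [Matrix.kroneckerMap_apply, Fmat, Kinvmat, Matrix.of_apply, if_true]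
      rw [if_pos e, e']
    · rintro ⟨u', v'⟩ _ hs
      simp only [Matrix.kroneckerMap_apply, Fmat, Kinvmat, Matrix.of_apply]
      by_cases h1 : (v : ℕ) = v' + 1
      · have h2 : ¬ (u = u') := by
          rintro rfl
          exact hs (Prod.ext rfl (Fin.ext (by simp; omega)))
        simp [h2]
      · simp [h1]
    · simp
  · apply Finset.sum_eq_zero
    rintro ⟨u', v'⟩ _
    have : ¬ ((v : ℕ) = v' + 1) := by omega
    simp [Fmat, this]

lemma EKmul {κ : Type*} (n : ℕ) (b : ℂ) (X : Matrix (Fin n × Fin n) κ ℂ) (u v : Fin n) (t : κ) :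
    ((Emat n ⊗ₖ Kmat n b) * X) (u, v) t
      = if h : (u : ℕ) + 1 < n then qint n (((u : ℕ) : ℂ) + 1) * xic n (b - (v : ℕ)) *
          X (⟨u + 1, h⟩, v) t else 0 := by
  rw [Matrix.mul_apply]
  split_ifs with h
  · rw [Finset.sum_eq_single (⟨u + 1, h⟩, v)]
    · simp [Emat, Kmat]
    · rintro ⟨u', v'⟩ _ hs
      simp only [Matrix.kroneckerMap_apply, Emat, Kmat, Matrix.of_apply]
      by_cases h1 : (u' : ℕ) = u + 1
      · have h2 : ¬ (v = v') := by
          rintro rfl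
          exact hs (Prod.ext (Fin.ext (by simp; omega)) rfl)
        simp [h2]
      · simp [h1]
    · simp
  · apply Finset.sum_eq_zero
    rintro ⟨u', v'⟩ _
    have : ¬ ((u' : ℕ) = u + 1) := by omega
    simp [Emat, this]

lemma KEmul {κ : Type*} (n : ℕ) (a : ℂ) (X : Matrix (Fin n × Fin n) κ ℂ) (u v : Fin n) (t : κ) :
    ((Kinvmat n a ⊗ₖ Emat n) * X) (u, v) t
      = if h : (v : ℕ) + 1 < n then xic n (-(a - (u : ℕ))) * qint n (((v : ℕ) : ℂ) + 1) *
          X (u, ⟨v + 1, h⟩) t else 0 := by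
  rw [Matrix.mul_apply]
  split_ifs with h
  · rw [Finset.sum_eq_single (u, ⟨v + 1, h⟩)]
    · simp [Emat, Kinvmat]
    · rintro ⟨u', v'⟩ _ hs
      simp only [Matrix.kroneckerMap_apply, Emat, Kinvmat, Matrix.of_apply]
      by_cases h1 : (v' : ℕ) = v + 1
      · have h2 : ¬ (u = u') := by
          rintro rfl
          exact hs (Prod.ext rfl (Fin.ext (by simp; omega)))
        simp [h2]
      · simp [h1]
    · simp
  · apply Finset.sum_eq_zero
    rintro ⟨u', v'⟩ _
    have : ¬ ((v' : ℕ) = v + 1) := by omega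
    simp [Emat, this]

lemma Kmat_diag (n : ℕ) (a : ℂ) :
    Kmat n a = Matrix.diagonal (fun i : Fin n => xic n (a - ((i : ℕ) : ℂ))) := by
  ext i j
  simp [Kmat, Matrix.diagonal_apply]

lemma Kinvmat_diag (n : ℕ) (a : ℂ) :
    Kinvmat n a = Matrix.diagonal (fun i : Fin n => xic n (-(a - ((i : ℕ) : ℂ)))) := by
  ext i j
  simp [Kinvmat, Matrix.diagonal_apply]

lemma KK_inv (n : ℕ) (a : ℂ) : Kmat n a * Kinvmat n a = 1 := by
  rw [Kmat_diag, Kinvmat_diag, Matrix.diagonal_mul_diagonal, ← Matrix.diagonal_one]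
  congr 1
  ext i
  rw [← xic_add, ← xic_zero n]
  congr 1
  ring

lemma inv_KK (n : ℕ) (a : ℂ) : Kinvmat n a * Kmat n a = 1 := by
  rw [Kmat_diag, Kinvmat_diag, Matrix.diagonal_mul_diagonal, ← Matrix.diagonal_one]
  congr 1
  ext i
  rw [← xic_add, ← xic_zero n]
  congr 1
  ring

lemma E_Kinv (n : ℕ) (a : ℂ) : Emat n * Kinvmat n a = xic n 1 • (Kinvmat n a * Emat n) := by
  ext i j
  rw [Kinvmat_diag, Matrix.mul_diagonal, Matrix.smul_apply, Matrix.diagonal_mul]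
  simp only [Emat, Matrix.of_apply]
  split_ifs with h
  · rw [smul_eq_mul, ← mul_assoc, ← xic_add, mul_comm]
    congr 2
    rw [h]; push_cast; ring
  · simp

lemma F_Kinv (n : ℕ) (a : ℂ) : Kinvmat n a * Fmat n a = xic n 1 • (Fmat n a * Kinvmat n a) := by
  ext i j
  rw [Kinvmat_diag, Matrix.smul_apply, Matrix.mul_diagonal, Matrix.diagonal_mul]
  simp only [Fmat, Matrix.of_apply]
  split_ifs with h
  · rw [smul_eq_mul, mul_left_comm, ← xic_add, mul_comm]
    congr 2
    rw [h]; push_cast; ring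
  · simp

lemma F_K (n : ℕ) (a : ℂ) : Fmat n a * Kmat n a = xic n 1 • (Kmat n a * Fmat n a) := by
  ext i j
  rw [Kmat_diag, Matrix.smul_apply, Matrix.mul_diagonal, Matrix.diagonal_mul]
  simp only [Fmat, Matrix.of_apply]
  split_ifs with h
  · rw [smul_eq_mul, ← mul_assoc, ← xic_add, mul_comm]
    congr 2
    rw [h]; push_cast; ring
  · simp

lemma E_K (n : ℕ) (a : ℂ) : Kmat n a * Emat n = xic n 1 • (Emat n * Kmat n a) := by
  ext i j
  rw [Kmat_diag, Matrix.smul_apply, Matrix.mul_diagonal, Matrix.diagonal_mul]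
  simp only [Emat, Matrix.of_apply]
  split_ifs with h
  · rw [smul_eq_mul, mul_left_comm, ← xic_add, mul_comm]
    congr 2
    rw [h]; push_cast; ring
  · simp

lemma EF_comm (n : ℕ) (hn : 2 ≤ n) (a : ℂ) :
    Emat n * Fmat n a - Fmat n a * Emat n
      = (qn n 1)⁻¹ • (Kmat n a * Kmat n a - Kinvmat n a * Kinvmat n a) := by
  have h1 : qn n 1 ≠ 0 := by
    have := qn_nat_ne n hn 1 (by omega) (by omega)
    simpa using this
  ext i j
  rw [Matrix.sub_apply, mulF, mulE, Matrix.smul_apply, Kmat_diag, Kinvmat_diag,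
    Matrix.diagonal_mul_diagonal, Matrix.diagonal_mul_diagonal, Matrix.sub_apply]
  simp only [Matrix.diagonal_apply, Emat, Fmat, Matrix.of_apply]
  by_cases hij : i = j
  · subst hij
    have eL : (if h : (i : ℕ) + 1 < n then (if (i : ℕ) + 1 = (i : ℕ) + 1 then qint n (((i : ℕ) + 1 : ℕ) : ℂ) else 0) * qint n (2 * a - ((i : ℕ) : ℂ)) else 0)
        = qint n (((i : ℕ) : ℂ) + 1) * qint n (2 * a - ((i : ℕ) : ℂ)) := by
      split_ifs with h h2
      · push_cast; rfl
      · exact absurd rfl h2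
      · have : (i : ℕ) + 1 = n := by have := i.2; omega
        have e : ((i : ℕ) : ℂ) + 1 = n := by exact_mod_cast this
        rw [e, qint, qn_n n hn]; simp
    have eR : (if h : 0 < (i : ℕ) then (if (i : ℕ) = (i : ℕ) - 1 + 1 then qint n (2 * a - (((i : ℕ) - 1 : ℕ) : ℂ)) else 0) * qint n ((i : ℕ) : ℂ) else 0)
        = qint n (2 * a - ((i : ℕ) : ℂ) + 1) * qint n ((i : ℕ) : ℂ) := by
      split_ifs with h h2
      · rw [Nat.cast_sub (by omega)]; push_cast; congr 2; ring
      · omega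
      · have : (i : ℕ) = 0 := by omega
        rw [this]; simp [qint, qn_zero]
    rw [eL, eR]
    simp only [if_true, smul_eq_mul, qint]
    field_simp
    generalize ((i : ℕ) : ℂ) = x
    simp only [qn, pow_two, mul_sub, sub_mul, ← xic_add]
    ring_nf
  · have hij' : ¬ ((i : ℕ) = j) := fun e => hij (Fin.ext e)
    rw [if_neg hij, if_neg hij]
    have hji : ¬ ((j : ℕ) = i) := fun e => hij' e.symm
    have e2 : 0 < (j : ℕ) → ¬ ((i : ℕ) = (j : ℕ) - 1 + 1) := by omega
    simp [hji]
    intro h h'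
    exact absurd h' (e2 h)

lemma EF_tensor (n : ℕ) (hn : 2 ≤ n) (a b : ℂ) :
    (Emat n ⊗ₖ Kmat n b + Kinvmat n a ⊗ₖ Emat n) * (Fmat n a ⊗ₖ Kmat n b + Kinvmat n a ⊗ₖ Fmat n b)
    = (Fmat n a ⊗ₖ Kmat n b + Kinvmat n a ⊗ₖ Fmat n b) * (Emat n ⊗ₖ Kmat n b + Kinvmat n a ⊗ₖ Emat n)
      + (qn n 1)⁻¹ • ((Kmat n a ⊗ₖ Kmat n b) * (Kmat n a ⊗ₖ Kmat n b)
          - (Kinvmat n a ⊗ₖ Kinvmat n b) * (Kinvmat n a ⊗ₖ Kinvmat n b)) := by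
  have ha : Emat n * Fmat n a = Fmat n a * Emat n + (qn n 1)⁻¹ • (Kmat n a * Kmat n a - Kinvmat n a * Kinvmat n a) := by
    rw [← EF_comm n hn a]; abel
  have hb : Emat n * Fmat n b = Fmat n b * Emat n + (qn n 1)⁻¹ • (Kmat n b * Kmat n b - Kinvmat n b * Kinvmat n b) := by
    rw [← EF_comm n hn b]; abel
  simp only [mul_add, add_mul, ← Matrix.mul_kronecker_mul]
  rw [ha, hb, E_Kinv, F_Kinv, F_K, E_K]
  ext ⟨i, i'⟩ ⟨j, j'⟩
  simp only [Matrix.add_apply, Matrix.sub_apply, Matrix.smul_apply, Matrix.kroneckerMap_apply, smul_eq_mul]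
  ring

lemma col_zero {ι : Type*} (n : ℕ) (hn : 2 ≤ n) (c : ℂ) (hc : NotHalfInt c) [Fintype ι]
    (D : Matrix ι (Fin n) ℂ) (A : Matrix ι ι ℂ) (h : D * Fmat n c = A * D)
    (h0 : ∀ p, D p ⟨0, by omega⟩ = 0) : D = 0 := by
  have h1 : qn n 1 ≠ 0 := by
    have := qn_nat_ne n hn 1 (by omega) (by omega)
    simpa using this
  have key : ∀ t : ℕ, ∀ ht : t < n, ∀ p, D p ⟨t, ht⟩ = 0 := by
    intro t
    induction t with
    | zero => intro ht p; exact h0 p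
    | succ t ih =>
      intro ht p
      have e := congrFun (congrFun h p) ⟨t, by omega⟩
      rw [mulF, dif_pos ht, Matrix.mul_apply, Finset.sum_eq_zero] at e
      · rcases mul_eq_zero.1 e with e | e
        · exact e
        · exfalso
          have h2 := qn_half_ne n hn c hc (-(t : ℤ))
          push_cast at h2
          rw [← sub_eq_add_neg] at h2
          rw [qint] at e
          exact (div_ne_zero h2 h1) e
      · intro q _
        rw [ih]; simp
  ext p t
  exact key t t.2 p

lemma Yinc_apply (n : ℕ) (k : ℕ) (a b c : ℂ) (h : a + b - c = k) (u v t : Fin n) :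
    Yinc n a b c (u, v) t
      = if (u : ℕ) + v = t + k then CZ n k a b c ((u : ℕ) : ℤ) ((v : ℕ) : ℤ) t else 0 := by
  unfold Yinc
  simp only [Matrix.of_apply]
  rw [CG_eq n k a b c h, h]
  have : (((u : ℕ) : ℂ) + ((v : ℕ) : ℂ) - ((t : ℕ) : ℂ) = k) ↔ ((u : ℕ) + v = t + k) := by
    rw [sub_eq_iff_eq_add']
    exact_mod_cast Iff.rfl
  simp only [this]

lemma Y_K (n : ℕ) (k : ℕ) (a b c : ℂ) (h : a + b - c = k) :
    Yinc n a b c * Kmat n c = (Kmat n a ⊗ₖ Kmat n b) * Yinc n a b c := by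
  ext ⟨u, v⟩ t
  rw [Kmat_diag, Kmat_diag, Kmat_diag, Matrix.diagonal_kronecker_diagonal, Matrix.mul_diagonal,
    Matrix.diagonal_mul, Yinc_apply n k a b c h]
  split_ifs with e
  · have e' : ((u : ℕ) : ℂ) + ((v : ℕ) : ℂ) = ((t : ℕ) : ℂ) + k := by exact_mod_cast e
    rw [← xic_add, mul_comm]
    congr 2
    linear_combination e' - h
  · simp

lemma Y_Kinv (n : ℕ) (a b c : ℂ) (Y : Matrix (Fin n × Fin n) (Fin n) ℂ)
    (h : Y * Kmat n c = (Kmat n a ⊗ₖ Kmat n b) * Y) :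
    Y * Kinvmat n c = (Kinvmat n a ⊗ₖ Kinvmat n b) * Y := by
  calc Y * Kinvmat n c
      = ((Kinvmat n a ⊗ₖ Kinvmat n b) * (Kmat n a ⊗ₖ Kmat n b)) * (Y * Kinvmat n c) := by
        rw [← Matrix.mul_kronecker_mul, inv_KK, inv_KK, Matrix.one_kronecker_one, Matrix.one_mul]
    _ = (Kinvmat n a ⊗ₖ Kinvmat n b) * (((Kmat n a ⊗ₖ Kmat n b) * Y) * Kinvmat n c) := by
        simp only [Matrix.mul_assoc]
    _ = _ := by
        rw [← h, Matrix.mul_assoc Y, KK_inv, Matrix.mul_one]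

lemma Y_F (n : ℕ) (hn : 2 ≤ n) (k : ℕ) (a b c : ℂ) (hc : NotHalfInt c) (h : a + b - c = k) :
    Yinc n a b c * Fmat n c
        = (Fmat n a ⊗ₖ Kmat n b + Kinvmat n a ⊗ₖ Fmat n b) * Yinc n a b c := by
  ext ⟨u, v⟩ t
  rw [Matrix.add_mul, Matrix.add_apply, mulF, FKmul, KFmul]
  by_cases huv : (u : ℕ) + v = t + 1 + k
  · have hrec := CZ_rec n hn k a b c hc h ((u : ℕ) : ℤ) ((v : ℕ) : ℤ) t (by have := t.2; omega)
      (by have := u.2; omega) (by have := v.2; omega) (by omega)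
    push_cast at hrec
    have e1 : (if h : (t : ℕ) + 1 < n then Yinc n a b c (u, v) ⟨t + 1, h⟩ * qint n (2 * c - (t : ℕ)) else 0)
        = (qn n 1)⁻¹ * (if (t : ℕ) + 1 < n then qn n (2 * c - (t : ℕ)) * CZ n k a b c ((u : ℕ) : ℤ) ((v : ℕ) : ℤ) (t + 1) else 0) := by
      split_ifs with ht
      · rw [Yinc_apply n k a b c h, if_pos (by simpa using huv), qint]
        simp only
        ring
      · simp
    have e2 : (if h : 0 < (u : ℕ) then qint n (2 * a - (u : ℕ) + 1) * xic n (b - (v : ℕ)) *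
          Yinc n a b c (⟨u - 1, by omega⟩, v) t else 0)
        = (qn n 1)⁻¹ * (xic n (b - (v : ℕ)) * qn n (2 * a - (u : ℕ) + 1) * CZ n k a b c (((u : ℕ) : ℤ) - 1) ((v : ℕ) : ℤ) t) := by
      split_ifs with hu
      · rw [Yinc_apply n k a b c h, if_pos (by simp only; omega), qint]
        simp only
        rw [Nat.cast_sub (by omega)]
        push_cast
        ring
      · have : ((u : ℕ) : ℤ) - 1 = -1 := by omega
        rw [this, CZ_u_neg]; simp
    have e3 : (if h : 0 < (v : ℕ) then xic n (-(a - (u : ℕ))) * qint n (2 * b - (v : ℕ) + 1) *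
          Yinc n a b c (u, ⟨v - 1, by omega⟩) t else 0)
        = (qn n 1)⁻¹ * (xic n (-(a - (u : ℕ))) * qn n (2 * b - (v : ℕ) + 1) * CZ n k a b c ((u : ℕ) : ℤ) (((v : ℕ) : ℤ) - 1) t) := by
      split_ifs with hv
      · rw [Yinc_apply n k a b c h, if_pos (by simp only; omega), qint]
        simp only
        rw [Nat.cast_sub (by omega)]
        push_cast
        ring
      · have : ((v : ℕ) : ℤ) - 1 = -1 := by omega
        rw [this, CZ_v_neg _ _ _ _ _ _ _ (by omega)]; simp
    rw [e1, e2, e3, hrec]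
    ring
  · have z1 : ∀ ht, Yinc n a b c (u, v) ⟨t + 1, ht⟩ = 0 := by
      intro ht
      rw [Yinc_apply n k a b c h, if_neg (by simpa using huv)]
    have z2 : 0 < (u : ℕ) → ∀ hh, Yinc n a b c (⟨u - 1, hh⟩, v) t = 0 := by
      intro hu hh
      rw [Yinc_apply n k a b c h, if_neg (by simp only; omega)]
    have z3 : 0 < (v : ℕ) → ∀ hh, Yinc n a b c (u, ⟨v - 1, hh⟩) t = 0 := by
      intro hu hh
      rw [Yinc_apply n k a b c h, if_neg (by simp only; omega)]
    split_ifs with h1 h2 h3 h3 h2 h3 h3 <;> simp [*]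

lemma CZ_t0 (n : ℕ) (hn : 2 ≤ n) (k : ℕ) (a b c : ℂ) (u v : ℤ) :
    CZ n k a b c u v 0 = Complex.exp (Real.pi * Complex.I * (c - a - b) / 2) *
  (-1 : ℂ) ^ v *
  xic n (((v : ℂ) * (2 * b - (v : ℂ) + 1) - (u : ℂ) * (2 * a - (u : ℂ) + 1)) / 2) *
  (qbin n (2 * c) (2 * c - ((0 : ℕ) : ℂ)))⁻¹ *
  qbin n (2 * c) (a + b + c - ((n : ℂ) - 1)) * qbin n (k : ℂ) (u : ℂ) := by
  unfold CZ Sm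
  simp [Tm, Rq_zero n hn, xic_zero]

lemma CZ_t0_ne (n : ℕ) (hn : 2 ≤ n) (k : ℕ) (hk : k < n) (a b c : ℂ) (hc : NotHalfInt c)
    (h : a + b - c = k) : CZ n k a b c 0 k 0 ≠ 0 := by
  rw [CZ_t0 n hn]
  have e : qbin n (k : ℂ) ((0 : ℤ) : ℂ) ≠ 0 := by
    have : qbin n (k : ℂ) ((0 : ℤ) : ℂ) = Rq n 0 k := by simp [Rq]
    rw [this, Rq_eq n _ k hk, Finset.prod_ne_zero_iff]
    intro j hj
    have hj' := Finset.mem_range.1 hj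
    have := qn_nat_ne n hn (j + 1) (by omega) (by omega)
    push_cast at this
    rw [zero_add]
    exact div_ne_zero this this
  have e2 : qbin n (2 * c) (a + b + c - ((n : ℂ) - 1)) ≠ 0 := by
    apply qbin_nz n hn c hc _ (n - 1 - k) (by omega)
    rw [Nat.cast_sub (by omega), Nat.cast_sub (by omega)]
    push_cast
    linear_combination -h
  have e3 : qbin n (2 * c) (2 * c - ((0 : ℕ) : ℂ)) ≠ 0 :=
    qbin_nz n hn c hc _ 0 (by omega) (by ring)
  have e4 : (-1 : ℂ) ^ (k : ℤ) ≠ 0 := zpow_ne_zero _ (by norm_num)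
  exact mul_ne_zero (mul_ne_zero (mul_ne_zero (mul_ne_zero (mul_ne_zero (Complex.exp_ne_zero _) e4)
    (xic_ne _ _)) (inv_ne_zero e3)) e2) e

lemma CZ_E0 (n : ℕ) (hn : 2 ≤ n) (k : ℕ) (hk : k < n) (a b c : ℂ) (u v : ℕ) (huv : u + v + 1 = k) :
    qn n ((u : ℂ) + 1) * xic n (b - v) * CZ n k a b c ((u : ℤ) + 1) v 0
      + xic n (-(a - u)) * qn n ((v : ℂ) + 1) * CZ n k a b c u ((v : ℤ) + 1) 0 = 0 := by
  rw [CZ_t0 n hn, CZ_t0 n hn]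
  have hR := Rq_succ n hn u v (by omega)
  have r1 : Rq n u (v + 1) = qbin n (k : ℂ) ((u : ℤ) : ℂ) := by
    rw [Rq, ← huv]; push_cast; congr 1; ring
  have r2 : Rq n ((u : ℂ) + 1) v = qbin n (k : ℂ) (((u : ℤ) + 1 : ℤ) : ℂ) := by
    rw [Rq, ← huv]; push_cast; congr 1; ring
  rw [r1, r2] at hR
  have s : (-1 : ℂ) ^ ((v : ℤ) + 1) = -(-1 : ℂ) ^ (v : ℤ) := by
    rw [zpow_add₀ (by norm_num)]; simp
  have hx : xic n (b - v) * xic n ((((v : ℤ) : ℂ) * (2 * b - ((v : ℤ) : ℂ) + 1) - (((u : ℤ) + 1 : ℤ) : ℂ) * (2 * a - (((u : ℤ) + 1 : ℤ) : ℂ) + 1)) / 2)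
     = xic n (-(a - u)) * xic n (((((v : ℤ) + 1 : ℤ) : ℂ) * (2 * b - (((v : ℤ) + 1 : ℤ) : ℂ) + 1) - ((u : ℤ) : ℂ) * (2 * a - ((u : ℤ) : ℂ) + 1)) / 2) := by
    rw [← xic_add, ← xic_add]
    congr 1
    push_cast
    ring
  rw [s]
  set A := xic n ((((v : ℤ) : ℂ) * (2 * b - ((v : ℤ) : ℂ) + 1) - (((u : ℤ) + 1 : ℤ) : ℂ) * (2 * a - (((u : ℤ) + 1 : ℤ) : ℂ) + 1)) / 2)
  set B := xic n (((((v : ℤ) + 1 : ℤ) : ℂ) * (2 * b - (((v : ℤ) + 1 : ℤ) : ℂ) + 1) - ((u : ℤ) : ℂ) * (2 * a - ((u : ℤ) : ℂ) + 1)) / 2)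
  linear_combination (Complex.exp (Real.pi * Complex.I * (c - a - b) / 2) *
    (-1 : ℂ) ^ (v : ℤ) * (qbin n (2 * c) (2 * c - ((0 : ℕ) : ℂ)))⁻¹ *
    qbin n (2 * c) (a + b + c - ((n : ℂ) - 1))) *
    (qn n ((u : ℂ) + 1) * qbin n (k : ℂ) (((u : ℤ) + 1 : ℤ) : ℂ) * hx - xic n (-(a - u)) * B * hR)

lemma Y_E (n : ℕ) (hn : 2 ≤ n) (k : ℕ) (hk : k < n) (a b c : ℂ) (hc : NotHalfInt c)
    (h : a + b - c = k) :
    Yinc n a b c * Emat n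
        = (Emat n ⊗ₖ Kmat n b + Kinvmat n a ⊗ₖ Emat n) * Yinc n a b c := by
  have hF := Y_F n hn k a b c hc h
  have hK := Y_K n k a b c h
  have hK' := Y_Kinv n a b c _ hK
  have hEF := EF_tensor n hn a b
  have hEc : Emat n * Fmat n c = Fmat n c * Emat n + (qn n 1)⁻¹ • (Kmat n c * Kmat n c - Kinvmat n c * Kinvmat n c) := by
    rw [← EF_comm n hn c]; abel
  have hcol : ∀ p, (Yinc n a b c * Emat n
        - (Emat n ⊗ₖ Kmat n b + Kinvmat n a ⊗ₖ Emat n) * Yinc n a b c) p ⟨0, by omega⟩ = 0 := by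
    rintro ⟨u, v⟩
    rw [Matrix.sub_apply, mulE, Matrix.add_mul, Matrix.add_apply, EKmul, KEmul]
    rw [dif_neg (by simp)]
    by_cases huv : (u : ℕ) + v + 1 = k
    · rw [dif_pos (by omega), dif_pos (by omega), Yinc_apply n k a b c h, Yinc_apply n k a b c h,
        if_pos (by simp only; omega), if_pos (by simp only; omega)]
      have := CZ_E0 n hn k hk a b c u v huv
      simp only [qint]
      push_cast
      linear_combination (-(qn n 1)⁻¹) * this
    · have z1 : ∀ hh, Yinc n a b c (⟨u + 1, hh⟩, v) ⟨0, by omega⟩ = 0 := by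
        intro hh
        rw [Yinc_apply n k a b c h, if_neg (by simp only; omega)]
      have z2 : ∀ hh, Yinc n a b c (u, ⟨v + 1, hh⟩) ⟨0, by omega⟩ = 0 := by
        intro hh
        rw [Yinc_apply n k a b c h, if_neg (by simp only; omega)]
      simp [z1, z2]
  set Y := Yinc n a b c
  set DE := Emat n ⊗ₖ Kmat n b + Kinvmat n a ⊗ₖ Emat n
  set DF := Fmat n a ⊗ₖ Kmat n b + Kinvmat n a ⊗ₖ Fmat n b
  set KK := Kmat n a ⊗ₖ Kmat n b
  set KI := Kinvmat n a ⊗ₖ Kinvmat n b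
  have q1 : Y * (Kmat n c * Kmat n c) = KK * KK * Y := by
    rw [← Matrix.mul_assoc, hK, Matrix.mul_assoc, hK, Matrix.mul_assoc]
  have q2 : Y * (Kinvmat n c * Kinvmat n c) = KI * KI * Y := by
    rw [← Matrix.mul_assoc, hK', Matrix.mul_assoc, hK', Matrix.mul_assoc]
  have main : (Y * Emat n - DE * Y) * Fmat n c = DF * (Y * Emat n - DE * Y) := by
    have l1 : Y * Emat n * Fmat n c = DF * (Y * Emat n) + (qn n 1)⁻¹ • (KK * KK * Y - KI * KI * Y) := by
      rw [Matrix.mul_assoc, hEc, Matrix.mul_add, ← Matrix.mul_assoc, hF, Matrix.mul_smul, Matrix.mul_sub,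
        q1, q2, Matrix.mul_assoc]
    have l2 : DE * Y * Fmat n c = DF * (DE * Y) + (qn n 1)⁻¹ • (KK * KK * Y - KI * KI * Y) := by
      rw [Matrix.mul_assoc, hF, ← Matrix.mul_assoc, hEF, Matrix.add_mul, Matrix.smul_mul, Matrix.sub_mul,
        Matrix.mul_assoc DF]
    rw [Matrix.sub_mul, Matrix.mul_sub, l1, l2]
    abel
  exact sub_eq_zero.1 (col_zero n hn c hc _ DF main hcol)

lemma K_support (n : ℕ) (hn : 2 ≤ n) (k : ℕ) (hk : k < n) (a b c : ℂ) (h : a + b - c = k)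
    (M : Matrix (Fin n × Fin n) (Fin n) ℂ) (hM : M * Kmat n c = (Kmat n a ⊗ₖ Kmat n b) * M)
    (u v t : Fin n) (huv : (u : ℕ) + v ≠ t + k) : M (u, v) t = 0 := by
  have e := congrFun (congrFun hM (u, v)) t
  rw [Kmat_diag, Kmat_diag, Kmat_diag, Matrix.diagonal_kronecker_diagonal, Matrix.mul_diagonal,
    Matrix.diagonal_mul] at e
  simp only at e
  rw [← xic_add, mul_comm] at e
  rcases mul_eq_mul_right_iff.1 e with e | e
  · exfalso
    obtain ⟨m, hm⟩ := xic_inj n hn _ _ e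
    have hm' : ((u : ℕ) : ℂ) + ((v : ℕ) : ℂ) = ((t : ℕ) : ℂ) + k + 2 * n * m := by
      linear_combination hm + h
    have hm2 : ((u : ℕ) : ℤ) + ((v : ℕ) : ℤ) = ((t : ℕ) : ℤ) + k + 2 * n * m := by exact_mod_cast hm'
    have := u.2
    have := v.2
    have := t.2
    rcases lt_trichotomy m 0 with h0 | h0 | h0
    · have : (n : ℤ) * m ≤ n * (-1) := by
        apply mul_le_mul_of_nonneg_left <;> omega
      nlinarith
    · subst h0
      simp at hm2
      omega
    · have : (n : ℤ) * 1 ≤ n * m := by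
        apply mul_le_mul_of_nonneg_left <;> omega
      nlinarith
  · exact e


theorem Yinc_module_map_and_unique (n : ℕ) (hn : 2 ≤ n) (a b c : ℂ)
    (ha : NotHalfInt a) (hb : NotHalfInt b) (hc : NotHalfInt c)
    (habc : InZn n (a + b - c)) :
    (Yinc n a b c * Emat n
        = (Emat n ⊗ₖ Kmat n b + Kinvmat n a ⊗ₖ Emat n) * Yinc n a b c ∧
     Yinc n a b c * Fmat n c
        = (Fmat n a ⊗ₖ Kmat n b + Kinvmat n a ⊗ₖ Fmat n b) * Yinc n a b c ∧
     Yinc n a b c * Kmat n c = (Kmat n a ⊗ₖ Kmat n b) * Yinc n a b c) ∧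
    (NotHalfInt (a + b) →
      ∀ M : Matrix (Fin n × Fin n) (Fin n) ℂ,
        M * Emat n = (Emat n ⊗ₖ Kmat n b + Kinvmat n a ⊗ₖ Emat n) * M →
        M * Fmat n c = (Fmat n a ⊗ₖ Kmat n b + Kinvmat n a ⊗ₖ Fmat n b) * M →
        M * Kmat n c = (Kmat n a ⊗ₖ Kmat n b) * M →
        ∃ s : ℂ, M = s • Yinc n a b c) := by
  obtain ⟨k, hk, h⟩ := habc
  have hE := Y_E n hn k hk a b c hc h
  have hF := Y_F n hn k a b c hc h
  have hK := Y_K n k a b c h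
  refine ⟨⟨hE, hF, hK⟩, ?_⟩
  intro _ M mE mF mK
  have h1 : qn n 1 ≠ 0 := by
    have := qn_nat_ne n hn 1 (by omega) (by omega)
    simpa using this
  have hnz := CZ_t0_ne n hn k hk a b c hc h
  refine ⟨M (⟨0, by omega⟩, ⟨k, hk⟩) ⟨0, by omega⟩ / CZ n k a b c 0 k 0, ?_⟩
  set s := M (⟨0, by omega⟩, ⟨k, hk⟩) ⟨0, by omega⟩ / CZ n k a b c 0 k 0 with hs
  set D := M - s • Yinc n a b c with hD
  have dE : D * Emat n = (Emat n ⊗ₖ Kmat n b + Kinvmat n a ⊗ₖ Emat n) * D := by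
    rw [hD, Matrix.sub_mul, Matrix.mul_sub, Matrix.smul_mul, Matrix.mul_smul, mE, hE]
  have dF : D * Fmat n c = (Fmat n a ⊗ₖ Kmat n b + Kinvmat n a ⊗ₖ Fmat n b) * D := by
    rw [hD, Matrix.sub_mul, Matrix.mul_sub, Matrix.smul_mul, Matrix.mul_smul, mF, hF]
  have dK : D * Kmat n c = (Kmat n a ⊗ₖ Kmat n b) * D := by
    rw [hD, Matrix.sub_mul, Matrix.mul_sub, Matrix.smul_mul, Matrix.mul_smul, mK, hK]
  have base : D (⟨0, by omega⟩, ⟨k, hk⟩) ⟨0, by omega⟩ = 0 := by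
    rw [hD, Matrix.sub_apply, Matrix.smul_apply, Yinc_apply n k a b c h, if_pos (by simp), smul_eq_mul, hs]
    simp only [Nat.cast_zero]
    field_simp
    ring
  have step : ∀ u : ℕ, ∀ v : ℕ, ∀ hu : u < n, ∀ hv : v < n, u + v = k →
      D (⟨u, hu⟩, ⟨v, hv⟩) ⟨0, by omega⟩ = 0 := by
    intro u
    induction u with
    | zero =>
      intro v hu hv e
      have : v = k := by omega
      subst this
      exact base
    | succ u ih =>
      intro v hu hv e
      have eq := congrFun (congrFun dE (⟨u, by omega⟩, ⟨v, hv⟩)) ⟨0, by omega⟩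
      rw [mulE, Matrix.add_mul, Matrix.add_apply, EKmul, KEmul, dif_neg (by simp),
        dif_pos (by simpa using hu), dif_pos (by simp only; omega)] at eq
      simp only at eq
      rw [ih (v + 1) (by omega) (by omega) (by omega), mul_zero, add_zero] at eq
      have n1 : qint n ((u : ℂ) + 1) ≠ 0 := by
        have := qn_nat_ne n hn (u + 1) (by omega) hu
        push_cast at this
        exact div_ne_zero this h1
      rcases mul_eq_zero.1 eq.symm with e | e
      · exact absurd e (mul_ne_zero n1 (xic_ne _ _))
      · exact e
  have hcol : ∀ p, D p ⟨0, by omega⟩ = 0 := by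
    rintro ⟨u, v⟩
    by_cases e : (u : ℕ) + v = k
    · exact step u v u.2 v.2 e
    · exact K_support n hn k hk a b c h D dK u v _ (by simpa using e)
  exact sub_eq_zero.1 (col_zero n hn c hc D _ dF hcol)

end
end
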